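/- arXiv:math/9911137 — 2 statements merged into one kernel-verified Lean document; each statement's English description precedes it below -/
import Mathlib

section
/- For a ring R the following are equivalent: (1) the right R-module R_R is FP-injective; (2) the left R-module _RR is an FP-cogenerator; (3) there exists an fp-flat FP-cogenerator in the category of left R-modules; (4) there exists an fp-flat cogenerator in the category of left R-modules; (5) whenever α : M → N is a homomorphism of finitely presented left R-modules such that α* = Hom_R(α, R) is surjective, α is injective; (6) every finitely presented left R-module is semireflexive; (7) every finitely presented left R-module embeds in an fp-flat left R-module; (8) every left R-module embeds in an fp-flat left R-module; (9) every FP-injective left R-module is fp-flat; (10) every injective left R-module is fp-flat; (11) every indecomposable injective left R-module is fp-flat; (12) every flat right R-module is fp-injective. -/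
/-!
Common definitions: rings are associative with identity, not necessarily commutative.
Left `R`-modules are `Module R M`; right `R`-modules are `Module Rᵐᵒᵖ M`.
-/

universe u

open MulOpposite Function Pointwise

section Defs

variable (R : Type u) [Ring R]

/-- Defining relations of the tensor product `K ⊗_R M` of a right `R`-module `K`
and a left `R`-module `M`, inside the free abelian group on `K × M`. -/
def TensorRels (K M : Type u) [AddCommGroup K] [Module Rᵐᵒᵖ K]
    [AddCommGroup M] [Module R M] : AddSubgroup (FreeAbelianGroup (K × M)) :=
  AddSubgroup.closure
    ({x | ∃ k₁ k₂ m, x = FreeAbelianGroup.of (k₁ + k₂, m) - FreeAbelianGroup.of (k₁, m) -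
        FreeAbelianGroup.of (k₂, m)} ∪
     {x | ∃ k m₁ m₂, x = FreeAbelianGroup.of (k, m₁ + m₂) - FreeAbelianGroup.of (k, m₁) -
        FreeAbelianGroup.of (k, m₂)} ∪
     {x | ∃ (r : R) (k : K) (m : M),
        x = FreeAbelianGroup.of (op r • k, m) - FreeAbelianGroup.of (k, r • m)})

/-- The tensor product `K ⊗_R M` of a right `R`-module `K` and a left `R`-module `M`
over the (not necessarily commutative) ring `R`, as an abelian group. -/
def NCTensor (K M : Type u) [AddCommGroup K] [Module Rᵐᵒᵖ K]
    [AddCommGroup M] [Module R M] : Type u :=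
  FreeAbelianGroup (K × M) ⧸ TensorRels R K M

instance (K M : Type u) [AddCommGroup K] [Module Rᵐᵒᵖ K] [AddCommGroup M] [Module R M] :
    AddCommGroup (NCTensor R K M) :=
  QuotientAddGroup.Quotient.addCommGroup _

/-- The map `μ ⊗ ν : K ⊗_R M → K' ⊗_R M'` induced by a map `μ` of right `R`-modules
and a map `ν` of left `R`-modules. -/
def tensorCongr {K K' M M' : Type u} [AddCommGroup K] [Module Rᵐᵒᵖ K]
    [AddCommGroup K'] [Module Rᵐᵒᵖ K'] [AddCommGroup M] [Module R M]
    [AddCommGroup M'] [Module R M'] (μ : K →ₗ[Rᵐᵒᵖ] K') (ν : M →ₗ[R] M') :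
    NCTensor R K M →+ NCTensor R K' M' :=
  QuotientAddGroup.map (TensorRels R K M) (TensorRels R K' M')
    (FreeAbelianGroup.lift fun p : K × M => FreeAbelianGroup.of (μ p.1, ν p.2))
    (by
      refine (AddSubgroup.closure_le _).2 ?_
      rintro x ((⟨k₁, k₂, m, rfl⟩ | ⟨k, m₁, m₂, rfl⟩) | ⟨r, k, m, rfl⟩) <;>
        refine AddSubgroup.mem_comap.2 (AddSubgroup.subset_closure ?_)
      · exact Or.inl <| Or.inl ⟨μ k₁, μ k₂, ν m, by simp [map_add]⟩
      · exact Or.inl <| Or.inr ⟨μ k, ν m₁, ν m₂, by simp [map_add]⟩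
      · exact Or.inr ⟨r, μ k, ν m, by simp [map_smul]⟩)

/-- A left `R`-module `M` is flat if `μ ⊗ M` is injective for every injective
homomorphism `μ` of right `R`-modules. -/
def ModFlat (M : Type u) [AddCommGroup M] [Module R M] : Prop :=
  ∀ (K L : Type u) [AddCommGroup K] [Module Rᵐᵒᵖ K] [AddCommGroup L] [Module Rᵐᵒᵖ L]
    (μ : K →ₗ[Rᵐᵒᵖ] L), Injective μ →
      Injective (tensorCongr R μ (LinearMap.id : M →ₗ[R] M))

/-- A right `R`-module `M` is flat if `M ⊗ μ` is injective for every injective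
homomorphism `μ` of left `R`-modules. -/
def ModFlatRight (M : Type u) [AddCommGroup M] [Module Rᵐᵒᵖ M] : Prop :=
  ∀ (K L : Type u) [AddCommGroup K] [Module R K] [AddCommGroup L] [Module R L]
    (μ : K →ₗ[R] L), Injective μ →
      Injective (tensorCongr R (LinearMap.id : M →ₗ[Rᵐᵒᵖ] M) μ)

/-- A left `R`-module `M` is fp-flat if `μ ⊗ M` is injective for every injective
homomorphism `μ` of finitely presented right `R`-modules. -/
def FpFlat (M : Type u) [AddCommGroup M] [Module R M] : Prop :=
  ∀ (K L : Type u) [AddCommGroup K] [Module Rᵐᵒᵖ K] [AddCommGroup L] [Module Rᵐᵒᵖ L],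
    Module.FinitePresentation Rᵐᵒᵖ K → Module.FinitePresentation Rᵐᵒᵖ L →
    ∀ (μ : K →ₗ[Rᵐᵒᵖ] L), Injective μ →
      Injective (tensorCongr R μ (LinearMap.id : M →ₗ[R] M))

/-- A right `R`-module `M` is fp-flat if `M ⊗ μ` is injective for every injective
homomorphism `μ` of finitely presented left `R`-modules. -/
def FpFlatRight (M : Type u) [AddCommGroup M] [Module Rᵐᵒᵖ M] : Prop :=
  ∀ (K L : Type u) [AddCommGroup K] [Module R K] [AddCommGroup L] [Module R L],
    Module.FinitePresentation R K → Module.FinitePresentation R L →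
    ∀ (μ : K →ₗ[R] L), Injective μ →
      Injective (tensorCongr R (LinearMap.id : M →ₗ[Rᵐᵒᵖ] M) μ)

/-- `Ext¹_R(F, M) = 0`. -/
def ExtVanish (F M : Type u) [AddCommGroup F] [Module R F] [AddCommGroup M] [Module R M] :
    Prop :=
  Subsingleton
    (((Ext ℤ (ModuleCat.{u} R) 1).obj (Opposite.op (ModuleCat.of R F))).obj (ModuleCat.of R M))

/-- A left `R`-module `M` is FP-injective (absolutely pure) if `Ext¹_R(F, M) = 0` for
every finitely presented left `R`-module `F`. -/
def FPInjective (M : Type u) [AddCommGroup M] [Module R M] : Prop :=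
  ∀ (F : Type u) [AddCommGroup F] [Module R F], Module.FinitePresentation R F → ExtVanish R F M

/-- A left `R`-module `M` is fp-injective if for every injective homomorphism `μ : K → L`
of finitely presented left `R`-modules, the induced map `Hom(L, M) → Hom(K, M)` is
surjective. -/
def FpInjective (M : Type u) [AddCommGroup M] [Module R M] : Prop :=
  ∀ (K L : Type u) [AddCommGroup K] [Module R K] [AddCommGroup L] [Module R L],
    Module.FinitePresentation R K → Module.FinitePresentation R L →
    ∀ (μ : K →ₗ[R] L), Injective μ → ∀ f : K →ₗ[R] M, ∃ g : L →ₗ[R] M, g ∘ₗ μ = f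

/-- A left `R`-module `K` is an FP-cogenerator if for every nonzero homomorphism
`f : M → N` from a finitely generated module `M` to a finitely presented module `N`
there is `g : N → K` with `g ∘ f ≠ 0`. -/
def IsFPCogenerator (K : Type u) [AddCommGroup K] [Module R K] : Prop :=
  ∀ (M N : Type u) [AddCommGroup M] [Module R M] [AddCommGroup N] [Module R N],
    Module.Finite R M → Module.FinitePresentation R N →
    ∀ f : M →ₗ[R] N, f ≠ 0 → ∃ g : N →ₗ[R] K, g ∘ₗ f ≠ 0

/-- A left `R`-module `K` is a cogenerator if for every nonzero homomorphism `f : M → N`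
of left `R`-modules there is `g : N → K` with `g ∘ f ≠ 0`. -/
def IsCogenerator (K : Type u) [AddCommGroup K] [Module R K] : Prop :=
  ∀ (M N : Type u) [AddCommGroup M] [Module R M] [AddCommGroup N] [Module R N],
    ∀ f : M →ₗ[R] N, f ≠ 0 → ∃ g : N →ₗ[R] K, g ∘ₗ f ≠ 0

/-- The canonical evaluation map `M → M** = Hom(Hom(M, R), R)` for a left `R`-module `M`;
here `M* = Hom_R(M, R)` is a right `R`-module. -/
def dualEval (M : Type u) [AddCommGroup M] [Module R M] :
    M →ₗ[R] ((M →ₗ[R] R) →ₗ[Rᵐᵒᵖ] R) where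
  toFun m :=
    { toFun := fun f => f m
      map_add' := fun f g => rfl
      map_smul' := fun r f => rfl }
  map_add' m m' := LinearMap.ext fun f => f.map_add m m'
  map_smul' r m := LinearMap.ext fun f => by simp [f.map_smul]

/-- The canonical evaluation map `M → M** = Hom(Hom(M, R), R)` for a right `R`-module `M`;
here `M* = Hom_R(M, R)` is a left `R`-module. -/
def dualEvalRight (M : Type u) [AddCommGroup M] [Module Rᵐᵒᵖ M] :
    M →ₗ[Rᵐᵒᵖ] ((M →ₗ[Rᵐᵒᵖ] R) →ₗ[R] R) where
  toFun m :=
    { toFun := fun f => f m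
      map_add' := fun f g => rfl
      map_smul' := fun r f => rfl }
  map_add' m m' := LinearMap.ext fun f => f.map_add m m'
  map_smul' r m := LinearMap.ext fun f => by simp [f.map_smul]

/-- The left annihilator of a subset `X ⊆ R`. -/
def lAnn (X : Set R) : Set R := {a | ∀ x ∈ X, a * x = 0}

/-- The right annihilator of a subset `X ⊆ R`. -/
def rAnn (X : Set R) : Set R := {a | ∀ x ∈ X, x * a = 0}

/-- `R` is left coherent: every finitely generated left ideal is finitely presented. -/
def LeftCoherent : Prop :=
  ∀ I : Submodule R R, I.FG → Module.FinitePresentation R I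

/-- `R` is right coherent: every finitely generated right ideal is finitely presented. -/
def RightCoherent : Prop :=
  ∀ I : Submodule Rᵐᵒᵖ R, I.FG → Module.FinitePresentation Rᵐᵒᵖ I

/-- A left `R`-module `M` embeds in a free left `R`-module. -/
def EmbedsInFree (M : Type u) [AddCommGroup M] [Module R M] : Prop :=
  ∃ (ι : Type u) (f : M →ₗ[R] (ι →₀ R)), Injective f

/-- A right `R`-module `M` embeds in a free right `R`-module. -/
def EmbedsInFreeRight (M : Type u) [AddCommGroup M] [Module Rᵐᵒᵖ M] : Prop :=
  ∃ (ι : Type u) (f : M →ₗ[Rᵐᵒᵖ] (ι →₀ R)), Injective f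

/-- `R` is a left IF-ring: every finitely presented left `R`-module embeds in a free module. -/
def LeftIF : Prop :=
  ∀ (M : Type u) [AddCommGroup M] [Module R M],
    Module.FinitePresentation R M → EmbedsInFree R M

/-- `R` is a right IF-ring: every finitely presented right `R`-module embeds in a free module. -/
def RightIF : Prop :=
  ∀ (M : Type u) [AddCommGroup M] [Module Rᵐᵒᵖ M],
    Module.FinitePresentation Rᵐᵒᵖ M → EmbedsInFreeRight R M

/-- A module is cyclic if it is generated by one element. -/
def CyclicModule (M : Type u) [AddCommGroup M] [Module R M] : Prop :=
  ∃ m : M, Submodule.span R {m} = ⊤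

/-- `R` is a left CF-ring: every cyclic left `R`-module embeds in a free module. -/
def LeftCF : Prop :=
  ∀ (M : Type u) [AddCommGroup M] [Module R M], CyclicModule R M → EmbedsInFree R M

/-- `R` is a left FGF-ring: every finitely generated left `R`-module embeds in a free module. -/
def LeftFGF : Prop :=
  ∀ (M : Type u) [AddCommGroup M] [Module R M], Module.Finite R M → EmbedsInFree R M

/-- `R` is a left Kasch ring: `Hom_R(M, R) ≠ 0` for every nonzero cyclic left `R`-module. -/
def LeftKasch : Prop :=
  ∀ (M : Type u) [AddCommGroup M] [Module R M],
    CyclicModule R M → Nontrivial M → ∃ f : M →ₗ[R] R, f ≠ 0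

/-- `R` is a right Kasch ring: `Hom_R(M, R) ≠ 0` for every nonzero cyclic right `R`-module. -/
def RightKasch : Prop :=
  ∀ (M : Type u) [AddCommGroup M] [Module Rᵐᵒᵖ M],
    CyclicModule Rᵐᵒᵖ M → Nontrivial M → ∃ f : M →ₗ[Rᵐᵒᵖ] R, f ≠ 0

/-- The socle of a module: the sum of all its simple submodules. -/
def socle (M : Type u) [AddCommGroup M] [Module R M] : Submodule R M :=
  sSup {N : Submodule R M | IsSimpleModule R N}

/-- `R` is left semiartinian: every nonzero cyclic left `R`-module has a nonzero socle. -/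
def LeftSemiartinian : Prop :=
  ∀ (M : Type u) [AddCommGroup M] [Module R M],
    CyclicModule R M → Nontrivial M → socle R M ≠ ⊥

/-- A submodule `N ⊆ M` is essential if it meets every nonzero submodule nontrivially. -/
def EssentialSub {M : Type u} [AddCommGroup M] [Module R M] (N : Submodule R M) : Prop :=
  ∀ P : Submodule R M, P ≠ ⊥ → N ⊓ P ≠ ⊥

/-- `R` is semiregular: `R/rad R` is von Neumann regular,
where `rad R` is the Jacobson radical. -/
def Semiregular : Prop :=
  ∀ a : R, ∃ x : R, a - a * x * a ∈ Ideal.jacobson (⊥ : Ideal R)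

/-- `R` is semiperfect: `R/rad R` is semisimple and idempotents lift modulo `rad R`. -/
def Semiperfect : Prop :=
  IsSemisimpleModule R (R ⧸ Ideal.jacobson (⊥ : Ideal R)) ∧
    ∀ a : R, a * a - a ∈ Ideal.jacobson (⊥ : Ideal R) →
      ∃ e : R, e * e = e ∧ e - a ∈ Ideal.jacobson (⊥ : Ideal R)

/-- A module is indecomposable if it is nonzero and is not the direct sum of two
nonzero submodules. -/
def IndecModule (M : Type u) [AddCommGroup M] [Module R M] : Prop :=
  Nontrivial M ∧ ∀ A B : Submodule R M, IsCompl A B → A = ⊥ ∨ B = ⊥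

/-- `R` is weakly quasi-Frobenius: left and right coherent and left and right FP-injective. -/
def WQF : Prop :=
  LeftCoherent R ∧ RightCoherent R ∧ FPInjective R R ∧ FPInjective Rᵐᵒᵖ R

/-- `R` is quasi-Frobenius: left and right noetherian and left and right self-injective. -/
def QF : Prop :=
  IsNoetherianRing R ∧ IsNoetherian Rᵐᵒᵖ R ∧ Module.Injective R R ∧ Module.Injective Rᵐᵒᵖ R

end Defs

/-- A group is locally finite if every finitely generated subgroup is finite. -/
def LocallyFiniteGroup (G : Type*) [Group G] : Prop :=
  ∀ H : Subgroup G, H.FG → Finite H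


section ExtPart
open CategoryTheory

theorem schanuel_ext {S : Type u} [Ring S] {P L F M : Type u} [AddCommGroup P] [Module S P]
    [AddCommGroup L] [Module S L] [AddCommGroup F] [Module S F] [AddCommGroup M] [Module S M]
    [Module.Projective S P] (p : P →ₗ[S] F) (q : L →ₗ[S] F) (hp : Surjective p)
    (hq : Surjective q)
    (h : ∀ f : LinearMap.ker p →ₗ[S] M, ∃ g : P →ₗ[S] M, ∀ x, g x.1 = f x)
    (f : LinearMap.ker q →ₗ[S] M) : ∃ g : L →ₗ[S] M, ∀ x, g x.1 = f x := by
  obtain ⟨l, hl⟩ := Module.projective_lifting_property q p hq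
  have hl' : ∀ x, q (l x) = p x := fun x => LinearMap.congr_fun hl x
  let l0 : LinearMap.ker p →ₗ[S] LinearMap.ker q := l.restrict (fun x hx => by
    rw [LinearMap.mem_ker, hl']; exact hx)
  obtain ⟨g, hg⟩ := h (f ∘ₗ l0)
  let s : (LinearMap.ker q × P) →ₗ[S] L := (LinearMap.ker q).subtype.coprod l
  have hs : Surjective s := by
    intro y
    obtain ⟨x, hx⟩ := hp (q y)
    refine ⟨(⟨y - l x, by simp [hl', hx]⟩, x), by simp [s]⟩
  let t : (LinearMap.ker q × P) →ₗ[S] M := f.coprod g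
  have hk : LinearMap.ker s ≤ LinearMap.ker t := by
    rintro ⟨k, x⟩ hx
    have h1 : k.1 + l x = 0 := by simpa [s] using hx
    have hxp : x ∈ LinearMap.ker p := by
      rw [LinearMap.mem_ker, ← hl', eq_neg_of_add_eq_zero_right h1]; simp
    have h2 := hg ⟨x, hxp⟩
    have h3 : k + l0 ⟨x, hxp⟩ = 0 := Subtype.ext h1
    simp only [LinearMap.mem_ker, t, LinearMap.coprod_apply]
    rw [h2, LinearMap.comp_apply, ← map_add, h3, map_zero]
  let e := s.quotKerEquivOfSurjective hs
  refine ⟨(LinearMap.ker s).liftQ t hk ∘ₗ e.symm.toLinearMap, fun x => ?_⟩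
  have : e.symm x.1 = Submodule.Quotient.mk (x, 0) := by
    rw [LinearEquiv.symm_apply_eq]; simp [e, s]
  simp [this, t]

theorem extVanish_res {S : Type u} [Ring S] (F M : Type u) [AddCommGroup F] [Module S F]
    [AddCommGroup M] [Module S M] : ∃ (P : Type u) (_ : AddCommGroup P) (_ : Module S P)
      (_ : Module.Projective S P) (p : P →ₗ[S] F), Surjective p ∧
      (ExtVanish S F M ↔ ∀ f : LinearMap.ker p →ₗ[S] M, ∃ g : P →ₗ[S] M, ∀ x, g x.1 = f x) := by
  let P : ProjectiveResolution (ModuleCat.of S F) := projectiveResolution _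
  have := P.projective 0
  have hproj : Module.Projective S (P.complex.X 0) :=
    (IsProjective.iff_projective (R := S) (P.complex.X 0)).2 this
  have hπ : Epi (P.π.f 0) := inferInstance
  have ex := P.exact₀
  have ex1 := P.exact_succ 0
  rw [ShortComplex.moduleCat_exact_iff] at ex ex1
  refine ⟨P.complex.X 0, inferInstance, inferInstance, hproj, (P.π.f 0).hom,
    (ModuleCat.epi_iff_surjective _).1 hπ, ?_⟩
  have e := P.isoExt (R := ℤ) 1 (ModuleCat.of S M)
  have h1 : ExtVanish S F M ↔ Subsingleton ((P.complex.linearYonedaObj ℤ (ModuleCat.of S M)).homology 1) :=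
    e.toLinearEquiv.toEquiv.subsingleton_congr
  rw [h1, ← ModuleCat.isZero_iff_subsingleton, ← HomologicalComplex.exactAt_iff_isZero_homology,
    HomologicalComplex.exactAt_iff' _ 0 1 2 (by simp) (by simp), ShortComplex.moduleCat_exact_iff]
  have key : (∀ x : (P.complex.X 1 ⟶ ModuleCat.of S M), P.complex.d 2 1 ≫ x = 0 →
      ∃ y : P.complex.X 0 ⟶ ModuleCat.of S M, P.complex.d 1 0 ≫ y = x) ↔
      ∀ f : LinearMap.ker (P.π.f 0).hom →ₗ[S] M,
        ∃ g : P.complex.X 0 →ₗ[S] M, ∀ x, g x.1 = f x := by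
    have hz : ∀ x, (P.π.f 0).hom ((P.complex.d 1 0).hom x) = 0 := fun x => by
      have := congrArg (fun t => t.hom x) P.complex_d_comp_π_f_zero
      exact this
    have hd : ∀ x, (P.complex.d 1 0).hom ((P.complex.d 2 1).hom x) = 0 := fun x => by
      have := congrArg (fun t => t.hom x) (P.complex.d_comp_d 2 1 0)
      exact this
    let d : P.complex.X 1 →ₗ[S] LinearMap.ker (P.π.f 0).hom :=
      (P.complex.d 1 0).hom.codRestrict _ hz
    have hds : Surjective d := by
      rintro ⟨x, hx⟩
      obtain ⟨y, hy⟩ := ex x hx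
      exact ⟨y, Subtype.ext hy⟩
    constructor
    · intro h f
      obtain ⟨y, hy⟩ := h (ModuleCat.ofHom (f ∘ₗ d)) (by
        ext x
        have : d ((P.complex.d 2 1).hom x) = 0 := Subtype.ext (hd x)
        change f (d ((P.complex.d 2 1).hom x)) = 0
        rw [this, map_zero])
      refine ⟨y.hom, fun x => ?_⟩
      obtain ⟨z, rfl⟩ := hds x
      exact congrArg (fun t => t.hom z) hy
    · intro h x hx
      have hk : LinearMap.ker d ≤ LinearMap.ker x.hom := by
        intro z hz'
        obtain ⟨w, rfl⟩ := ex1 z (congrArg Subtype.val hz')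
        exact congrArg (fun t => t.hom w) hx
      obtain ⟨g, hg⟩ := h ((LinearMap.ker d).liftQ x.hom hk ∘ₗ
        (d.quotKerEquivOfSurjective hds).symm.toLinearMap)
      refine ⟨ModuleCat.ofHom g, ?_⟩
      ext z
      have h2 := hg (d z)
      have h3 : (d.quotKerEquivOfSurjective hds).symm (d z) = Submodule.Quotient.mk z := by
        rw [LinearEquiv.symm_apply_eq]; rfl
      simp only [LinearMap.comp_apply, LinearEquiv.coe_coe, h3] at h2
      exact h2
  exact key

/-- the elementary extension property -/
def ExtProp (S : Type u) [Ring S] (M : Type u) [AddCommGroup M] [Module S M] : Prop :=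
  ∀ (n : ℕ) (K : Submodule S (Fin n → S)), K.FG → ∀ f : K →ₗ[S] M,
    ∃ g : (Fin n → S) →ₗ[S] M, ∀ x : K, g x.1 = f x

theorem extVanish_iff {S : Type u} [Ring S] {P F M : Type u} [AddCommGroup P] [Module S P]
    [AddCommGroup F] [Module S F] [AddCommGroup M] [Module S M] [Module.Projective S P]
    (p : P →ₗ[S] F) (hp : Surjective p) : ExtVanish S F M ↔
      ∀ f : LinearMap.ker p →ₗ[S] M, ∃ g : P →ₗ[S] M, ∀ x, g x.1 = f x := by
  obtain ⟨Q, _, _, _, q, hq, h⟩ := extVanish_res (S := S) F M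
  rw [h]
  exact ⟨fun h => schanuel_ext q p hq hp h, fun h => schanuel_ext p q hp hq h⟩

theorem fpInjective_iff {S : Type u} [Ring S] {M : Type u} [AddCommGroup M] [Module S M] :
    FPInjective S M ↔ ExtProp S M := by
  constructor
  · intro h n K hK f
    have hF : Module.FinitePresentation S ((Fin n → S) ⧸ K) :=
      Module.finitePresentation_of_surjective K.mkQ K.mkQ_surjective (by simpa using hK)
    have h1 := (extVanish_iff K.mkQ K.mkQ_surjective).1 (h _ hF)
    obtain ⟨g, hg⟩ := h1 (f ∘ₗ (LinearEquiv.ofEq _ _ K.ker_mkQ).toLinearMap)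
    exact ⟨g, fun x => hg ⟨x.1, by simp⟩⟩
  · intro h F _ _ hF
    obtain ⟨n, q, hq⟩ := Module.Finite.exists_fin' S F
    rw [extVanish_iff q hq]
    exact h n _ (Module.FinitePresentation.fg_ker q hq)

theorem ExtProp.of_injective {S : Type u} [Ring S] {M : Type u} [AddCommGroup M] [Module S M]
    (h : Module.Injective S M) : ExtProp S M := fun _ K _ f => h.out K.subtype K.injective_subtype f

/-- extension along monos into f.p. modules -/
theorem ExtProp.extend {S : Type u} [Ring S] {M : Type u} [AddCommGroup M] [Module S M]
    (h : ExtProp S M) {K L : Type u} [AddCommGroup K] [Module S K] [AddCommGroup L] [Module S L]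
    [Module.Finite S K] [Module.FinitePresentation S L] (μ : K →ₗ[S] L) (hμ : Injective μ)
    (f : K →ₗ[S] M) : ∃ g : L →ₗ[S] M, g ∘ₗ μ = f := by
  obtain ⟨n, q, hq⟩ := Module.Finite.exists_fin' S L
  have hr : (LinearMap.range μ).FG := Module.Finite.iff_fg.1 inferInstance
  have hK : ((LinearMap.range μ).comap q).FG := by
    apply Submodule.fg_of_fg_map_of_fg_inf_ker q
    · rwa [Submodule.map_comap_eq_of_surjective hq]
    · have : LinearMap.ker q ≤ (LinearMap.range μ).comap q := fun x hx => by
        rw [LinearMap.mem_ker] at hx; simp [hx]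
      rw [inf_eq_right.2 this]
      exact Module.FinitePresentation.fg_ker q hq
  let e := LinearEquiv.ofInjective μ hμ
  let c : (LinearMap.range μ).comap q →ₗ[S] LinearMap.range μ := q.restrict (fun x hx => hx)
  obtain ⟨g, hg⟩ := h n _ hK (f ∘ₗ e.symm.toLinearMap ∘ₗ c)
  have hk : LinearMap.ker q ≤ LinearMap.ker g := by
    intro x hx
    have hx0 : q x = 0 := hx
    have := hg ⟨x, by simp [hx0]⟩
    rw [LinearMap.mem_ker, this]
    have h0 : c ⟨x, by simp [hx0]⟩ = 0 := Subtype.ext hx0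
    simp [h0]
  refine ⟨(LinearMap.ker q).liftQ g hk ∘ₗ (q.quotKerEquivOfSurjective hq).symm.toLinearMap, ?_⟩
  ext k
  obtain ⟨x, hx⟩ := hq (μ k)
  have h3 : (q.quotKerEquivOfSurjective hq).symm (μ k) = Submodule.Quotient.mk x := by
    rw [LinearEquiv.symm_apply_eq]; simp [hx]
  have h4 : c ⟨x, by simp [hx]⟩ = e k := Subtype.ext hx
  have h5 := hg ⟨x, by simp [hx]⟩
  simp only [LinearMap.comp_apply, LinearEquiv.coe_coe, h4, e.symm_apply_apply] at h5
  simp [h3, h5]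

end ExtPart

section TensorPart

variable {R : Type u} [Ring R] {K M : Type u} [AddCommGroup K] [Module Rᵐᵒᵖ K]
    [AddCommGroup M] [Module R M]

variable (R) in
/-- pure tensors -/
def tm (k : K) (m : M) : NCTensor R K M :=
  QuotientAddGroup.mk (s := TensorRels R K M) (FreeAbelianGroup.of (k, m))

theorem tm_add_left (k₁ k₂ : K) (m : M) : tm R (k₁ + k₂) m = tm R k₁ m + tm R k₂ m := by
  have : (FreeAbelianGroup.of (k₁ + k₂, m) - FreeAbelianGroup.of (k₁, m) -
        FreeAbelianGroup.of (k₂, m)) ∈ TensorRels R K M :=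
    AddSubgroup.subset_closure (Or.inl <| Or.inl ⟨_, _, _, rfl⟩)
  have h := (QuotientAddGroup.eq_zero_iff (N := TensorRels R K M) _).2 this
  rw [QuotientAddGroup.mk_sub, QuotientAddGroup.mk_sub, sub_sub, sub_eq_zero] at h
  exact h

theorem tm_add_right (k : K) (m₁ m₂ : M) : tm R k (m₁ + m₂) = tm R k m₁ + tm R k m₂ := by
  have : (FreeAbelianGroup.of (k, m₁ + m₂) - FreeAbelianGroup.of (k, m₁) -
        FreeAbelianGroup.of (k, m₂)) ∈ TensorRels R K M :=
    AddSubgroup.subset_closure (Or.inl <| Or.inr ⟨_, _, _, rfl⟩)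
  have h := (QuotientAddGroup.eq_zero_iff (N := TensorRels R K M) _).2 this
  rw [QuotientAddGroup.mk_sub, QuotientAddGroup.mk_sub, sub_sub, sub_eq_zero] at h
  exact h

theorem tm_smul (r : R) (k : K) (m : M) : tm R (op r • k) m = tm R k (r • m) := by
  have : (FreeAbelianGroup.of (op r • k, m) - FreeAbelianGroup.of (k, r • m)) ∈ TensorRels R K M :=
    AddSubgroup.subset_closure (Or.inr ⟨_, _, _, rfl⟩)
  have h := (QuotientAddGroup.eq_zero_iff (N := TensorRels R K M) _).2 this
  rw [QuotientAddGroup.mk_sub, sub_eq_zero] at h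
  exact h

/-- left variable additive map -/
def tmL (m : M) : K →+ NCTensor R K M := AddMonoidHom.mk' (fun k => tm R k m)
  (fun _ _ => tm_add_left _ _ _)

/-- right variable additive map -/
def tmR (k : K) : M →+ NCTensor R K M := AddMonoidHom.mk' (fun m => tm R k m)
  (fun _ _ => tm_add_right _ _ _)

theorem tm_zero_left (m : M) : tm R (0 : K) m = 0 := map_zero (tmL m)
theorem tm_zero_right (k : K) : tm R k (0 : M) = 0 := map_zero (tmR k)
theorem tm_neg_left (k : K) (m : M) : tm R (-k) m = - tm R k m := map_neg (tmL m) k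
theorem tm_sum_left {ι : Type*} (s : Finset ι) (k : ι → K) (m : M) :
    tm R (∑ i ∈ s, k i) m = ∑ i ∈ s, tm R (k i) m := map_sum (tmL m) k s
theorem tm_sum_right {ι : Type*} (s : Finset ι) (k : K) (m : ι → M) :
    tm R k (∑ i ∈ s, m i) = ∑ i ∈ s, tm R k (m i) := map_sum (tmR k) m s

theorem tensorCongr_tm {K' M' : Type u} [AddCommGroup K'] [Module Rᵐᵒᵖ K'] [AddCommGroup M']
    [Module R M'] (μ : K →ₗ[Rᵐᵒᵖ] K') (ν : M →ₗ[R] M') (k : K) (m : M) :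
    tensorCongr R μ ν (tm R k m) = tm R (μ k) (ν m) := by
  simp only [tensorCongr, tm]
  erw [QuotientAddGroup.map_mk]
  simp
  rfl

theorem tensor_induction {p : NCTensor R K M → Prop} (t : NCTensor R K M)
    (h0 : p 0) (htm : ∀ k m, p (tm R k m)) (hadd : ∀ x y, p x → p y → p (x + y)) : p t := by
  obtain ⟨x, rfl⟩ := QuotientAddGroup.mk_surjective (s := TensorRels R K M) t
  induction x using FreeAbelianGroup.induction_on with
  | zero => exact h0
  | of x => exact htm x.1 x.2
  | neg x _ =>
    have := htm (-x.1) x.2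
    rw [tm_neg_left] at this
    exact this
  | add x y hx hy => exact hadd _ _ hx hy

/-- universal property -/
def tLift {A : Type*} [AddCommGroup A] (f : K → M → A)
    (h1 : ∀ k₁ k₂ m, f (k₁ + k₂) m = f k₁ m + f k₂ m)
    (h2 : ∀ k m₁ m₂, f k (m₁ + m₂) = f k m₁ + f k m₂)
    (h3 : ∀ (r : R) k m, f (op r • k) m = f k (r • m)) : NCTensor R K M →+ A :=
  QuotientAddGroup.lift (TensorRels R K M) (FreeAbelianGroup.lift fun p : K × M => f p.1 p.2) (by
    refine (AddSubgroup.closure_le _).2 ?_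
    rintro x ((⟨k₁, k₂, m, rfl⟩ | ⟨k, m₁, m₂, rfl⟩) | ⟨r, k, m, rfl⟩)
    · simp [h1]
    · simp [h2]
    · simp [h3])

theorem tLift_tm {A : Type*} [AddCommGroup A] (f : K → M → A) (h1 h2 h3) (k : K) (m : M) :
    tLift (R := R) f h1 h2 h3 (tm R k m) = f k m := by
  simp only [tLift, tm]
  erw [QuotientAddGroup.lift_mk]
  simp

theorem exists_rep {p : ℕ} (k : Fin p → K) (hk : Submodule.span Rᵐᵒᵖ (Set.range k) = ⊤)
    (t : NCTensor R K M) : ∃ e : Fin p → M, t = ∑ i, tm R (k i) (e i) := by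
  induction t using tensor_induction with
  | h0 => exact ⟨0, by simp [tm_zero_right]⟩
  | htm x m =>
    have hx : x ∈ Submodule.span Rᵐᵒᵖ (Set.range k) := hk ▸ Submodule.mem_top
    obtain ⟨c, rfl⟩ := (Submodule.mem_span_range_iff_exists_fun _).1 hx
    refine ⟨fun i => unop (c i) • m, ?_⟩
    rw [tm_sum_left]
    refine Finset.sum_congr rfl fun i _ => ?_
    rw [← tm_smul, op_unop]
  | hadd x y hx hy =>
    obtain ⟨e, rfl⟩ := hx
    obtain ⟨e', rfl⟩ := hy
    exact ⟨e + e', by simp [tm_add_right, Finset.sum_add_distrib]⟩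

theorem fpFlat_self : FpFlat R R := by
  intro K L _ _ _ _ _ _ μ hμ
  let θ : ∀ (K : Type u) [AddCommGroup K] [Module Rᵐᵒᵖ K], NCTensor R K R →+ K := fun K _ _ =>
    tLift (R := R) (fun k r => op r • k) (fun _ _ _ => smul_add _ _ _)
      (fun _ _ _ => by rw [op_add, add_smul]) (fun r k m => by rw [smul_smul]; simp)
  have hθ : ∀ (t : NCTensor R K R), t = tm R (θ K t) 1 := by
    intro t
    induction t using tensor_induction with
    | h0 => simp [tm_zero_left]
    | htm k m => simp [θ, tLift_tm, tm_smul]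
    | hadd x y hx hy => rw [map_add, tm_add_left, ← hx, ← hy]
  have hn : ∀ t, θ L (tensorCongr R μ LinearMap.id t) = μ (θ K t) := by
    intro t
    induction t using tensor_induction with
    | h0 => simp
    | htm k m => simp [θ, tLift_tm, tensorCongr_tm]
    | hadd x y hx hy => simp only [map_add, hx, hy]
  rw [injective_iff_map_eq_zero]
  intro t ht
  have := hn t
  rw [ht, map_zero] at this
  rw [hθ t, hμ (this.symm.trans (map_zero μ).symm), tm_zero_left]

theorem modFlatRight_self : ModFlatRight R R := by
  intro K L _ _ _ _ μ hμ
  let θ : ∀ (K : Type u) [AddCommGroup K] [Module R K], NCTensor R R K →+ K := fun K _ _ =>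
    tLift (R := R) (fun r k => r • k) (fun _ _ _ => add_smul _ _ _)
      (fun _ _ _ => smul_add _ _ _) (fun r k m => by rw [smul_smul]; simp)
  have hθ : ∀ (t : NCTensor R R K), t = tm R 1 (θ K t) := by
    intro t
    induction t using tensor_induction with
    | h0 => simp [tm_zero_right]
    | htm k m => simp [θ, tLift_tm, ← tm_smul]
    | hadd x y hx hy => rw [map_add, tm_add_right, ← hx, ← hy]
  have hn : ∀ t, θ L (tensorCongr R LinearMap.id μ t) = μ (θ K t) := by
    intro t
    induction t using tensor_induction with
    | h0 => simp
    | htm k m => simp [θ, tLift_tm, tensorCongr_tm]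
    | hadd x y hx hy => simp only [map_add, hx, hy]
  rw [injective_iff_map_eq_zero]
  intro t ht
  have := hn t
  rw [ht, map_zero] at this
  rw [hθ t, hμ (this.symm.trans (map_zero μ).symm), tm_zero_right]

end TensorPart

section CorePart

/-- The matrix form of right self FP-injectivity. -/
def CoreP (R : Type u) [Ring R] : Prop :=
  ∀ (n m : ℕ) (A : Fin n → Fin m → R) (g : Fin m → R),
    (∀ x : Fin m → R, (∀ i, ∑ j, A i j * x j = 0) → ∑ j, g j * x j = 0) →
    ∃ y : Fin n → R, ∀ j, g j = ∑ i, y i * A i j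

theorem linmap_fin_apply {S : Type*} [Ring S] {n : ℕ} {M : Type*} [AddCommGroup M] [Module S M]
    (f : (Fin n → S) →ₗ[S] M) (v : Fin n → S) : f v = ∑ i, v i • f (Pi.single i 1) := by
  conv_lhs => rw [pi_eq_sum_univ' v]
  rw [map_sum]
  refine Finset.sum_congr rfl fun i _ => ?_
  rw [map_smul]

/-- `v ↦ ∑ v i • b i` -/
def comb (S : Type*) [Ring S] {n : ℕ} {M : Type*} [AddCommGroup M] [Module S M]
    (b : Fin n → M) : (Fin n → S) →ₗ[S] M := Fintype.linearCombination S b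

theorem comb_apply {S : Type*} [Ring S] {n : ℕ} {M : Type*} [AddCommGroup M] [Module S M]
    (b : Fin n → M) (v : Fin n → S) : comb S b v = ∑ i, v i • b i := rfl

theorem comb_single {S : Type*} [Ring S] {n : ℕ} {M : Type*} [AddCommGroup M] [Module S M]
    (b : Fin n → M) (i : Fin n) : comb S b (Pi.single i 1) = b i := by
  simp [comb_apply, Pi.single_apply, ite_smul]

theorem range_comb {S : Type*} [Ring S] {n : ℕ} {M : Type*} [AddCommGroup M] [Module S M]
    (b : Fin n → M) : LinearMap.range (comb S b) = Submodule.span S (Set.range b) :=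
  Fintype.range_linearCombination S b

theorem fg_exists_comb {S : Type*} [Ring S] {M : Type*} [AddCommGroup M] [Module S M]
    {K : Submodule S M} (hK : K.FG) : ∃ (n : ℕ) (b : Fin n → M), LinearMap.range (comb S b) = K := by
  obtain ⟨n, b, hb⟩ := Submodule.fg_iff_exists_fin_generating_family.1 hK
  exact ⟨n, b, by rw [range_comb, hb]⟩

/-- a presentation by generators and relations -/
theorem exists_presentation {S : Type*} [Ring S] (N : Type*) [AddCommGroup N] [Module S N]
    [Module.FinitePresentation S N] : ∃ (m n : ℕ) (b : Fin m → N) (A : Fin n → Fin m → S),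
      Surjective (comb S b) ∧ LinearMap.ker (comb S b) = LinearMap.range (comb S A) := by
  obtain ⟨m, b, hb⟩ := fg_exists_comb (Module.Finite.fg_top (R := S) (M := N))
  have hs : Surjective (comb S b) := LinearMap.range_eq_top.1 hb
  obtain ⟨n, A, hA⟩ := fg_exists_comb (Module.FinitePresentation.fg_ker _ hs)
  exact ⟨m, n, b, A, hs, hA.symm⟩

variable {R : Type u} [Ring R]

theorem CoreP.semirefl (h : CoreP R) (N : Type u) [AddCommGroup N] [Module R N]
    [Module.FinitePresentation R N] (v : N) (hv : ∀ f : N →ₗ[R] R, f v = 0) : v = 0 := by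
  obtain ⟨m, n, b, A, hs, hk⟩ := exists_presentation (S := R) N
  obtain ⟨g, rfl⟩ := hs v
  obtain ⟨y, hy⟩ := h n m A g (by
    intro x hx
    let x' : (Fin m → R) →ₗ[R] R := comb R x
    have hle : LinearMap.ker (comb R b) ≤ LinearMap.ker x' := by
      rw [hk]
      rintro _ ⟨z, rfl⟩
      rw [LinearMap.mem_ker, comb_apply A, map_sum]
      refine Finset.sum_eq_zero fun i _ => ?_
      rw [map_smul]
      have := hx i
      simp only [x', comb_apply, smul_eq_mul]
      rw [this, mul_zero]
    have := hv ((LinearMap.ker (comb R b)).liftQ x' hle ∘ₗ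
      ((comb R b).quotKerEquivOfSurjective hs).symm.toLinearMap)
    have h3 : ((comb R b).quotKerEquivOfSurjective hs).symm (comb R b g) =
        Submodule.Quotient.mk g := by
      rw [LinearEquiv.symm_apply_eq]; rfl
    simp only [LinearMap.comp_apply, LinearEquiv.coe_coe, h3] at this
    exact this)
  have : g ∈ LinearMap.ker (comb R b) := by
    rw [hk]
    exact ⟨y, by ext j; simp [comb_apply, hy j]⟩
  exact this

theorem CoreP.of_semirefl (h : ∀ (N : Type u) [AddCommGroup N] [Module R N],
    Module.FinitePresentation R N → ∀ (v : N), (∀ f : N →ₗ[R] R, f v = 0) → v = 0) : CoreP R := by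
  intro n m A g hg
  let K := LinearMap.range (comb R A)
  have hK : K.FG := by
    have : K = Submodule.span R (Set.range A) := range_comb A
    rw [this]; exact Submodule.fg_span (Set.finite_range A)
  have hF : Module.FinitePresentation R ((Fin m → R) ⧸ K) :=
    Module.finitePresentation_of_surjective K.mkQ K.mkQ_surjective (by simpa using hK)
  have := h _ hF (K.mkQ g) (by
    intro f
    have h1 := linmap_fin_apply (f ∘ₗ K.mkQ) g
    rw [LinearMap.comp_apply] at h1
    rw [h1]
    refine hg _ fun i => ?_
    have h2 := linmap_fin_apply (f ∘ₗ K.mkQ) (A i)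
    simp only [smul_eq_mul] at h2
    rw [← h2, LinearMap.comp_apply]
    have : K.mkQ (A i) = 0 := by
      rw [← LinearMap.mem_ker, K.ker_mkQ]
      exact ⟨Pi.single i 1, comb_single A i⟩
    rw [this, map_zero])
  rw [← LinearMap.mem_ker, K.ker_mkQ] at this
  obtain ⟨y, hy⟩ := this
  exact ⟨y, fun j => by rw [← hy]; simp [comb_apply]⟩

theorem CoreP.of_extProp (h : ExtProp Rᵐᵒᵖ R) : CoreP R := by
  intro n m A g hg
  let T : (Fin m → Rᵐᵒᵖ) →ₗ[Rᵐᵒᵖ] (Fin n → Rᵐᵒᵖ) := comb Rᵐᵒᵖ (fun j i => op (A i j))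
  let G : (Fin m → Rᵐᵒᵖ) →ₗ[Rᵐᵒᵖ] R := comb Rᵐᵒᵖ g
  have hle : LinearMap.ker T.rangeRestrict ≤ LinearMap.ker G := by
    intro x hx
    rw [LinearMap.ker_rangeRestrict, LinearMap.mem_ker] at hx
    have := hg (fun j => unop (x j)) (fun i => by
      have h1 := congrArg unop (congrFun hx i)
      simpa [T, comb_apply] using h1)
    rw [LinearMap.mem_ker, ← this]
    simp [G, comb_apply, MulOpposite.smul_eq_mul_unop]
  let e := T.rangeRestrict.quotKerEquivOfSurjective T.surjective_rangeRestrict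
  obtain ⟨f, hf⟩ := h n (LinearMap.range T) (by
      have : LinearMap.range T = Submodule.span _ _ := range_comb _
      rw [this]; exact Submodule.fg_span (Set.finite_range _))
      ((LinearMap.ker T.rangeRestrict).liftQ G hle ∘ₗ e.symm.toLinearMap)
  refine ⟨fun i => f (Pi.single i 1), fun j => ?_⟩
  have h1 := hf (T.rangeRestrict (Pi.single j 1))
  have h3 : e.symm (T.rangeRestrict (Pi.single j 1)) = Submodule.Quotient.mk (Pi.single j 1) := by
    rw [LinearEquiv.symm_apply_eq]; rfl
  simp only [LinearMap.comp_apply, LinearEquiv.coe_coe, h3, Submodule.liftQ_apply] at h1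
  have h4 : G (Pi.single j 1) = g j := comb_single _ _
  have h5 : T (Pi.single j 1) = fun i => op (A i j) := comb_single _ _
  rw [h4] at h1
  change f (T (Pi.single j 1)) = _ at h1
  rw [h5, linmap_fin_apply] at h1
  rw [← h1]
  simp [MulOpposite.smul_eq_mul_unop]

theorem CoreP.extProp (h : CoreP R) : ExtProp Rᵐᵒᵖ R := by
  intro n K hK f
  obtain ⟨m, A, rfl⟩ := fg_exists_comb hK
  have hm : ∀ j, A j ∈ LinearMap.range (comb Rᵐᵒᵖ A) := fun j => ⟨_, comb_single A j⟩
  obtain ⟨y, hy⟩ := h n m (fun i j => unop (A j i)) (fun j => f ⟨A j, hm j⟩) (by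
    intro x hx
    have h1 : ∑ j, (op (x j)) • (⟨A j, hm j⟩ : LinearMap.range (comb Rᵐᵒᵖ A)) = 0 := by
      apply Subtype.ext
      rw [Submodule.coe_sum]
      ext i
      simpa using congrArg op (hx i)
    have h2 := congrArg f h1
    simp only [map_sum, map_zero, map_smul] at h2
    simpa using h2)
  refine ⟨comb Rᵐᵒᵖ y, ?_⟩
  rintro ⟨_, ⟨z, rfl⟩⟩
  have h1 : (⟨comb Rᵐᵒᵖ A z, ⟨z, rfl⟩⟩ : LinearMap.range (comb Rᵐᵒᵖ A)) =
      ∑ j, z j • ⟨A j, hm j⟩ := by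
    apply Subtype.ext
    rw [Submodule.coe_sum]; exact comb_apply A z
  have h2 : comb Rᵐᵒᵖ y (comb Rᵐᵒᵖ A z) = ∑ j, comb Rᵐᵒᵖ y (z j • A j) := by
    rw [comb_apply A, map_sum]
  rw [h1, map_sum, ← h1]
  change comb Rᵐᵒᵖ y (comb Rᵐᵒᵖ A z) = _
  rw [h2]
  refine Finset.sum_congr rfl fun j _ => ?_
  rw [map_smul, map_smul, hy j, comb_apply]
  simp [MulOpposite.smul_eq_mul_unop]

/-- the pushout -/
theorem exists_pushout {n m : ℕ} (A : Fin n → Fin m → R) (g : Fin m → R)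
    (hg : ∀ x : Fin m → R, (∀ i, ∑ j, A i j * x j = 0) → ∑ j, g j * x j = 0) :
    ∃ (P : Type u) (_ : AddCommGroup P) (_ : Module Rᵐᵒᵖ P) (_ : Module.FinitePresentation Rᵐᵒᵖ P)
      (ι : Rᵐᵒᵖ →ₗ[Rᵐᵒᵖ] P) (e : Fin n → P), Injective ι ∧
      ∀ j, op (g j) • ι 1 = ∑ i, op (A i j) • e i := by
  let c : Fin m → Rᵐᵒᵖ × (Fin n → Rᵐᵒᵖ) := fun j => (op (g j), - fun i => op (A i j))
  let K := LinearMap.range (comb Rᵐᵒᵖ c)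
  have hK : K.FG := by
    have : K = Submodule.span _ _ := range_comb _
    rw [this]; exact Submodule.fg_span (Set.finite_range _)
  have hF : Module.FinitePresentation Rᵐᵒᵖ ((Rᵐᵒᵖ × (Fin n → Rᵐᵒᵖ)) ⧸ K) :=
    Module.finitePresentation_of_surjective K.mkQ K.mkQ_surjective (by simpa using hK)
  refine ⟨_, inferInstance, inferInstance, hF, K.mkQ ∘ₗ LinearMap.inl _ _ _,
    fun i => K.mkQ (0, Pi.single i 1), ?_, ?_⟩
  · rw [injective_iff_map_eq_zero]
    intro r hr
    rw [LinearMap.comp_apply, ← LinearMap.mem_ker, K.ker_mkQ] at hr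
    obtain ⟨x, hx⟩ := hr
    have h1 := congrArg (fun t => unop t.1) hx
    have h2 := hg (fun j => unop (x j)) (fun i => by
      have := congrArg (fun t => unop (t.2 i)) hx
      simpa [comb_apply, c, Prod.snd_sum] using this)
    apply unop_injective
    simp only [comb_apply, c, Prod.fst_sum] at h1
    simp at h1
    rw [← h1, h2]; rfl
  · intro j
    rw [← sub_eq_zero]
    simp only [LinearMap.comp_apply, ← map_smul, ← map_sum, ← map_sub]
    rw [← LinearMap.mem_ker, K.ker_mkQ]
    refine ⟨Pi.single j 1, ?_⟩
    rw [comb_single]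
    apply Prod.ext
    · simp [c, Prod.fst_sum]
    · ext i
      simp [c, Prod.snd_sum, Pi.single_apply]

theorem key_flat {F N : Type u} [AddCommGroup F] [Module R F] (hF : FpFlat R F)
    [AddCommGroup N] [Module R N] [Module.FinitePresentation R N] (φ : N →ₗ[R] F) (v : N)
    (hv : ∀ f : N →ₗ[R] R, f v = 0) : φ v = 0 := by
  obtain ⟨m, n, b, A, hs, hk⟩ := exists_presentation (S := R) N
  obtain ⟨g, rfl⟩ := hs v
  obtain ⟨P, _, _, _, ι, e, hι, he⟩ := exists_pushout A g (by
    intro x hx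
    let x' : (Fin m → R) →ₗ[R] R := comb R x
    have hle : LinearMap.ker (comb R b) ≤ LinearMap.ker x' := by
      rw [hk]
      rintro _ ⟨z, rfl⟩
      rw [LinearMap.mem_ker, comb_apply A, map_sum]
      refine Finset.sum_eq_zero fun i _ => ?_
      rw [map_smul]
      have := hx i
      simp only [x', comb_apply, smul_eq_mul]
      rw [this, mul_zero]
    have := hv ((LinearMap.ker (comb R b)).liftQ x' hle ∘ₗ
      ((comb R b).quotKerEquivOfSurjective hs).symm.toLinearMap)
    have h3 : ((comb R b).quotKerEquivOfSurjective hs).symm (comb R b g) =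
        Submodule.Quotient.mk g := by
      rw [LinearEquiv.symm_apply_eq]; rfl
    simp only [LinearMap.comp_apply, LinearEquiv.coe_coe, h3] at this
    exact this)
  have hA : ∀ i, ∑ j, A i j • b j = 0 := fun i => by
    have : A i ∈ LinearMap.ker (comb R b) := by rw [hk]; exact ⟨_, comb_single A i⟩
    exact this
  have h0 : tm R (ι 1) (φ (comb R b g)) = 0 := by
    rw [comb_apply, map_sum, tm_sum_right]
    have : ∀ j, tm R (ι 1) (φ (g j • b j)) = ∑ i, tm R (e i) (φ (A i j • b j)) := fun j => by
      rw [map_smul, ← tm_smul, he j, tm_sum_left]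
      simp only [tm_smul, map_smul]
    simp only [this]
    rw [Finset.sum_comm]
    refine Finset.sum_eq_zero fun i _ => ?_
    rw [← tm_sum_right, ← map_sum, hA, map_zero, tm_zero_right]
  have h1 := hF Rᵐᵒᵖ P inferInstance inferInstance ι hι
  rw [injective_iff_map_eq_zero] at h1
  have h2 := h1 (tm R 1 (φ (comb R b g))) (by rw [tensorCongr_tm]; exact h0)
  let θ : NCTensor R Rᵐᵒᵖ F →+ F := tLift (R := R) (fun r k => unop r • k)
    (fun _ _ _ => by rw [unop_add, add_smul]) (fun _ _ _ => smul_add _ _ _)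
    (fun r k m => by rw [smul_smul]; simp)
  have h3 := congrArg θ h2
  simpa [θ, tLift_tm] using h3

theorem CoreP.of_fpInj (h : FpInjective Rᵐᵒᵖ R) : CoreP R := by
  intro n m A g hg
  obtain ⟨P, _, _, hP, ι, e, hι, he⟩ := exists_pushout A g hg
  let f : Rᵐᵒᵖ →ₗ[Rᵐᵒᵖ] R := LinearMap.toSpanSingleton Rᵐᵒᵖ R 1
  obtain ⟨ρ, hρ⟩ := h Rᵐᵒᵖ P inferInstance hP ι hι f
  refine ⟨fun i => ρ (e i), fun j => ?_⟩
  have h1 := congrArg ρ (he j)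
  have h2 : ρ (ι 1) = 1 := by
    have := LinearMap.congr_fun hρ 1
    simpa [f] using this
  rw [map_smul, h2, map_sum] at h1
  simpa using h1

theorem CoreP.fpFlat (h : CoreP R) {E : Type u} [AddCommGroup E] [Module R E]
    (hE : ExtProp R E) : FpFlat R E := by
  intro K L _ _ _ _ hK hL μ hμ
  rw [injective_iff_map_eq_zero]
  intro t ht
  obtain ⟨p, q, k, B, hs, hk⟩ := exists_presentation (S := Rᵐᵒᵖ) K
  obtain ⟨e, rfl⟩ := exists_rep (R := R) (M := E) k
    (by rw [← range_comb]; exact LinearMap.range_eq_top.2 hs) t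
  have hB : ∀ j, ∑ i, B j i • k i = 0 := fun i => by
    have : B i ∈ LinearMap.ker (comb Rᵐᵒᵖ k) := by rw [hk]; exact ⟨_, comb_single B i⟩
    exact this
  -- the functional vanishing
  have h1 : ∀ φ : K →ₗ[Rᵐᵒᵖ] R, ∑ i, φ (k i) • e i = 0 := by
    intro φ
    obtain ⟨ψ, hψ⟩ := h.extProp.extend μ hμ φ
    let θ : NCTensor R L E →+ E := tLift (R := R) (fun l x => ψ l • x)
      (fun _ _ _ => by rw [map_add, add_smul]) (fun _ _ _ => smul_add _ _ _)
      (fun r k m => by rw [map_smul, smul_smul]; simp)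
    have := congrArg θ ht
    simp only [map_sum, map_zero, tensorCongr_tm, θ, tLift_tm] at this
    rw [← this]
    refine Finset.sum_congr rfl fun i _ => ?_
    rw [← hψ]; rfl
  let β : (Fin p → R) →ₗ[R] (Fin q → R) := comb R (fun i j => unop (B j i))
  let ε : (Fin p → R) →ₗ[R] E := comb R e
  have hle : LinearMap.ker β.rangeRestrict ≤ LinearMap.ker ε := by
    intro v hv
    rw [LinearMap.ker_rangeRestrict, LinearMap.mem_ker] at hv
    let v' : (Fin p → Rᵐᵒᵖ) →ₗ[Rᵐᵒᵖ] R := comb Rᵐᵒᵖ v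
    have hle : LinearMap.ker (comb Rᵐᵒᵖ k) ≤ LinearMap.ker v' := by
      rw [hk]
      rintro _ ⟨z, rfl⟩
      rw [LinearMap.mem_ker, comb_apply B, map_sum]
      refine Finset.sum_eq_zero fun j _ => ?_
      rw [map_smul]
      have := congrFun hv j
      have h2 : v' (B j) = 0 := by
        simpa [β, comb_apply, v', MulOpposite.smul_eq_mul_unop] using this
      rw [h2, smul_zero]
    have := h1 ((LinearMap.ker (comb Rᵐᵒᵖ k)).liftQ v' hle ∘ₗ
      ((comb Rᵐᵒᵖ k).quotKerEquivOfSurjective hs).symm.toLinearMap)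
    have h3 : ∀ i, ((comb Rᵐᵒᵖ k).quotKerEquivOfSurjective hs).symm (k i) =
        Submodule.Quotient.mk (Pi.single i 1) := fun i => by
      rw [LinearEquiv.symm_apply_eq]; exact (comb_single k i).symm
    simp only [LinearMap.comp_apply, LinearEquiv.coe_coe, h3, Submodule.liftQ_apply] at this
    have h4 : ∀ i, v' (Pi.single i 1) = v i := comb_single _
    simp only [h4] at this
    exact this
  let d := β.rangeRestrict.quotKerEquivOfSurjective β.surjective_rangeRestrict
  obtain ⟨f, hf⟩ := hE q (LinearMap.range β) (by
      have : LinearMap.range β = Submodule.span _ _ := range_comb _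
      rw [this]; exact Submodule.fg_span (Set.finite_range _))
      ((LinearMap.ker β.rangeRestrict).liftQ ε hle ∘ₗ d.symm.toLinearMap)
  have he : ∀ i, e i = ∑ j, unop (B j i) • f (Pi.single j 1) := by
    intro i
    have h1 := hf (β.rangeRestrict (Pi.single i 1))
    have h3 : d.symm (β.rangeRestrict (Pi.single i 1)) = Submodule.Quotient.mk (Pi.single i 1) := by
      rw [LinearEquiv.symm_apply_eq]; rfl
    simp only [LinearMap.comp_apply, LinearEquiv.coe_coe, h3, Submodule.liftQ_apply] at h1
    have h4 : ε (Pi.single i 1) = e i := comb_single _ _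
    have h5 : β (Pi.single i 1) = fun j => unop (B j i) := comb_single _ _
    rw [h4] at h1
    change f (β (Pi.single i 1)) = _ at h1
    rw [h5, linmap_fin_apply] at h1
    exact h1.symm
  simp only [he, tm_sum_right, ← tm_smul, op_unop]
  rw [Finset.sum_comm]
  refine Finset.sum_eq_zero fun j _ => ?_
  rw [← tm_sum_left, hB, tm_zero_left]

theorem CoreP.fpInjective_of_flat (h : CoreP R) {M : Type u} [AddCommGroup M] [Module Rᵐᵒᵖ M]
    (hM : ModFlatRight R M) : FpInjective Rᵐᵒᵖ M := by
  intro K L _ _ _ _ hK hL μ hμ f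
  obtain ⟨p, q, k, B, hs, hk⟩ := exists_presentation (S := Rᵐᵒᵖ) K
  have hB : ∀ j, ∑ i, B j i • k i = 0 := fun i => by
    have : B i ∈ LinearMap.ker (comb Rᵐᵒᵖ k) := by rw [hk]; exact ⟨_, comb_single B i⟩
    exact this
  let β : (Fin p → R) →ₗ[R] (Fin q → R) := comb R (fun i j => unop (B j i))
  let Z := LinearMap.ker β
  let β' : ((Fin p → R) ⧸ Z) →ₗ[R] (Fin q → R) := Z.liftQ β le_rfl
  have hβ' : Injective β' := LinearMap.ker_eq_bot.1 (Submodule.ker_liftQ_eq_bot _ _ _ le_rfl)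
  let t : NCTensor R M ((Fin p → R) ⧸ Z) := ∑ i, tm R (f (k i)) (Z.mkQ (Pi.single i 1))
  have ht : t = 0 := by
    have h1 := hM _ _ β' hβ'
    rw [injective_iff_map_eq_zero] at h1
    apply h1
    simp only [t, map_sum, tensorCongr_tm]
    have h2 : ∀ i, β' (Z.mkQ (Pi.single i 1)) =
        ∑ j, unop (B j i) • (Pi.single j 1 : Fin q → R) := fun i => by
      have h5 : β (Pi.single i 1) = fun j => unop (B j i) := comb_single _ _
      change β (Pi.single i 1) = _
      rw [h5]
      ext j
      simp [Pi.single_apply]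
    simp only [h2, tm_sum_right, ← tm_smul, op_unop, LinearMap.id_apply, ← map_smul]
    rw [Finset.sum_comm]
    refine Finset.sum_eq_zero fun j _ => ?_
    rw [← tm_sum_left, ← map_sum, hB, map_zero, tm_zero_left]
  -- the image of `M ⊗ Z` in `M ^ p`
  let T : AddSubgroup (Fin p → M) := AddSubgroup.closure
    {w | ∃ (x : M) (z : Fin p → R), z ∈ Z ∧ w = fun i => op (z i) • x}
  let B2 : M → ((Fin p → R) ⧸ Z) →+ ((Fin p → M) ⧸ T) := fun x =>
    QuotientAddGroup.lift Z.toAddSubgroup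
      ((QuotientAddGroup.mk' T).comp
        (AddMonoidHom.mk' (fun (v : Fin p → R) => (fun i => op (v i) • x : Fin p → M))
          (fun a b => by ext i; simp [add_smul])))
      (by
        intro z hz
        simp only [AddMonoidHom.mem_ker, AddMonoidHom.comp_apply, QuotientAddGroup.mk'_apply,
          AddMonoidHom.mk'_apply]
        exact (QuotientAddGroup.eq_zero_iff _).2 (AddSubgroup.subset_closure ⟨x, z, hz, rfl⟩))
  have hB2 : ∀ x v, B2 x (Z.mkQ v) = QuotientAddGroup.mk (s := T) (fun i => op (v i) • x) :=
    fun x v => rfl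
  let θ : NCTensor R M ((Fin p → R) ⧸ Z) →+ ((Fin p → M) ⧸ T) := tLift (R := R) (fun x v => B2 x v)
    (fun x y v => by
      obtain ⟨v, rfl⟩ := Z.mkQ_surjective v
      rw [hB2, hB2, hB2, ← QuotientAddGroup.mk_add]
      congr 1
      ext i; simp)
    (fun x v w => map_add _ _ _)
    (fun r x v => by
      obtain ⟨v, rfl⟩ := Z.mkQ_surjective v
      rw [← map_smul, hB2, hB2]
      congr 1
      ext i; simp [smul_smul])
  have h1 := congrArg θ ht
  simp only [t, map_sum, map_zero, θ, tLift_tm, hB2] at h1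
  have h2 : (fun i => f (k i)) ∈ T := by
    rw [← QuotientAddGroup.eq_zero_iff, ← h1]
    have : (fun i => f (k i)) = ∑ i, (fun i' => op ((Pi.single i 1 : Fin p → R) i') • f (k i)) := by
      ext i'
      simp only [Finset.sum_apply]
      rw [Finset.sum_eq_single i']
      · simp
      · intro b _ hb; simp [Pi.single_apply, hb.symm]
      · simp
    rw [this]
    exact map_sum (QuotientAddGroup.mk' T) _ _
  -- extend every element of `T`
  have key : ∀ w ∈ T, ∃ g : L →ₗ[Rᵐᵒᵖ] M, ∀ i, g (μ (k i)) = w i := by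
    intro w hw
    induction hw using AddSubgroup.closure_induction with
    | mem w hw =>
      obtain ⟨x, z, hz, rfl⟩ := hw
      let z' : (Fin p → Rᵐᵒᵖ) →ₗ[Rᵐᵒᵖ] R := comb Rᵐᵒᵖ z
      have hle : LinearMap.ker (comb Rᵐᵒᵖ k) ≤ LinearMap.ker z' := by
        rw [hk]
        rintro _ ⟨c, rfl⟩
        rw [LinearMap.mem_ker, comb_apply B, map_sum]
        refine Finset.sum_eq_zero fun j _ => ?_
        rw [map_smul]
        have hz0 : β z = 0 := hz
        have := congrFun hz0 j
        have h2 : z' (B j) = 0 := by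
          simpa [β, comb_apply, z', MulOpposite.smul_eq_mul_unop] using this
        rw [h2, smul_zero]
      obtain ⟨ψ, hψ⟩ := h.extProp.extend μ hμ ((LinearMap.ker (comb Rᵐᵒᵖ k)).liftQ z' hle ∘ₗ
        ((comb Rᵐᵒᵖ k).quotKerEquivOfSurjective hs).symm.toLinearMap)
      have h3 : ∀ i, ((comb Rᵐᵒᵖ k).quotKerEquivOfSurjective hs).symm (k i) =
          Submodule.Quotient.mk (Pi.single i 1) := fun i => by
        rw [LinearEquiv.symm_apply_eq]; exact (comb_single k i).symm
      have h4 : ∀ i, z' (Pi.single i 1) = z i := comb_single _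
      have h5 : ∀ i, ψ (μ (k i)) = z i := fun i => by
        have := LinearMap.congr_fun hψ (k i)
        simp only [LinearMap.comp_apply, LinearEquiv.coe_coe, h3, Submodule.liftQ_apply, h4] at this
        exact this
      refine ⟨{ toFun := fun l => op (ψ l) • x
                map_add' := fun a b => by simp [add_smul]
                map_smul' := fun r a => by
                  simp [smul_smul, MulOpposite.smul_eq_mul_unop] }, fun i => ?_⟩
      simp [h5]
    | zero => exact ⟨0, by simp⟩
    | add w w' _ _ h1 h2 =>
      obtain ⟨g, hg⟩ := h1
      obtain ⟨g', hg'⟩ := h2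
      exact ⟨g + g', fun i => by simp [hg, hg']⟩
    | neg w _ h1 =>
      obtain ⟨g, hg⟩ := h1
      exact ⟨-g, fun i => by simp [hg]⟩
  obtain ⟨g, hg⟩ := key _ h2
  refine ⟨g, ?_⟩
  ext x
  obtain ⟨c, rfl⟩ := hs x
  simp [comb_apply, hg]

end CorePart

section HullPart

variable {R : Type u} [Ring R]

theorem exists_injective_embedding (D : Type u) [AddCommGroup D] [Module R D] :
    ∃ (E : Type u) (_ : AddCommGroup E) (_ : Module R E), Module.Injective R E ∧
      ∃ f : D →ₗ[R] E, Injective f := by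
  let J := CategoryTheory.Injective.under (ModuleCat.of R D)
  have : CategoryTheory.Injective (ModuleCat.of R J) :=
    inferInstanceAs (CategoryTheory.Injective J)
  refine ⟨J, inferInstance, inferInstance, Module.injective_module_of_injective_object R J,
    (CategoryTheory.Injective.ι (ModuleCat.of R D)).hom, ?_⟩
  exact (ModuleCat.mono_iff_injective _).1 inferInstance

theorem exists_extend_elt {E N : Type u} [AddCommGroup E] [Module R E] (hE : Module.Injective R E)
    [AddCommGroup N] [Module R N] (x : N) (e : E) (h : ∀ r : R, r • x = 0 → r • e = 0) :
    ∃ φ : N →ₗ[R] E, φ x = e := by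
  let T := LinearMap.toSpanSingleton R N x
  let f : (R ⧸ LinearMap.ker T) →ₗ[R] N := (LinearMap.ker T).liftQ T le_rfl
  have hf : Injective f := LinearMap.ker_eq_bot.1 (Submodule.ker_liftQ_eq_bot _ _ _ le_rfl)
  let g : (R ⧸ LinearMap.ker T) →ₗ[R] E := (LinearMap.ker T).liftQ
    (LinearMap.toSpanSingleton R E e) (fun r hr => h r hr)
  obtain ⟨φ, hφ⟩ := hE.out f hf g
  refine ⟨φ, ?_⟩
  have := hφ (Submodule.Quotient.mk 1)
  have h1 : f (Submodule.Quotient.mk 1) = x := one_smul R x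
  have h2 : g (Submodule.Quotient.mk 1) = e := one_smul R e
  rwa [h1, h2] at this

theorem exists_max_disjoint {E : Type u} [AddCommGroup E] [Module R E] (X B0 : Submodule R E)
    (h : Disjoint X B0) : ∃ B : Submodule R E, B0 ≤ B ∧ Disjoint X B ∧
      ∀ D, B ≤ D → Disjoint X D → D = B := by
  obtain ⟨B, hB, hm⟩ := zorn_le_nonempty₀ {B : Submodule R E | Disjoint X B} (by
    intro c hc hch y hy
    refine ⟨sSup c, ?_, fun z hz => le_sSup hz⟩
    exact (hch.directedOn.disjoint_sSup_right).2 (fun b hb => hc hb)) B0 h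
  exact ⟨B, hB, hm.1, fun D hD hd => le_antisymm (hm.2 hd hD) hD⟩

theorem exists_indec {N : Type u} [AddCommGroup N] [Module R N] (x : N) (hx : x ≠ 0) :
    ∃ (C : Type u) (_ : AddCommGroup C) (_ : Module R C), Module.Injective R C ∧ IndecModule R C ∧
      ∃ φ : N →ₗ[R] C, φ x ≠ 0 := by
  have hann : LinearMap.ker (LinearMap.toSpanSingleton R N x) ≠ ⊤ := by
    intro h
    have : (1 : R) ∈ LinearMap.ker (LinearMap.toSpanSingleton R N x) := h ▸ Submodule.mem_top
    exact hx (by simpa using this)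
  obtain ⟨I, hI, hle⟩ := Ideal.exists_le_maximal _ hann
  have hsimp : IsSimpleModule R (R ⧸ I) := (isSimpleModule_iff_isCoatom).2 hI.out
  obtain ⟨E, _, _, hE, ι, hι⟩ := exists_injective_embedding (R := R) (R ⧸ I)
  let S := LinearMap.range ι
  have hS : IsAtom S := by
    rw [← isSimpleModule_iff_isAtom]
    exact IsSimpleModule.congr (LinearEquiv.ofInjective ι hι).symm
  let s : E := ι (Submodule.Quotient.mk 1)
  have hsS : s ∈ S := ⟨_, rfl⟩
  have hs0 : s ≠ 0 := by
    intro h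
    have h1 : (Submodule.Quotient.mk 1 : R ⧸ I) = 0 := hι (h.trans (map_zero ι).symm)
    rw [Submodule.Quotient.mk_eq_zero] at h1
    exact hI.ne_top ((Ideal.eq_top_iff_one I).2 h1)
  obtain ⟨φ0, hφ0⟩ := exists_extend_elt hE x s (by
    intro r hr
    have : r ∈ I := hle (by simpa using hr)
    rw [← map_smul, ← Submodule.Quotient.mk_smul, smul_eq_mul, mul_one,
      (Submodule.Quotient.mk_eq_zero I).2 this, map_zero])
  obtain ⟨B, -, hSB, hBmax⟩ := exists_max_disjoint S ⊥ disjoint_bot_right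
  obtain ⟨C, hSC, hBC, hCmax⟩ := exists_max_disjoint B S hSB.symm
  have hj : Injective (B.mkQ ∘ₗ C.subtype) := by
    rw [injective_iff_map_eq_zero]
    intro c hc
    rw [LinearMap.comp_apply, ← LinearMap.mem_ker, B.ker_mkQ] at hc
    exact Subtype.ext ((Submodule.disjoint_def.1 hBC) _ hc c.2)
  obtain ⟨h, hh⟩ := hE.out _ hj C.subtype
  let k : E →ₗ[R] E := h ∘ₗ B.mkQ
  have hkC : ∀ c ∈ C, k c = c := fun c hc => hh ⟨c, hc⟩
  have hkB : ∀ b ∈ B, k b = 0 := fun b hb => by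
    have : B.mkQ b = 0 := by rw [← LinearMap.mem_ker, B.ker_mkQ]; exact hb
    simp only [k, LinearMap.comp_apply, this, map_zero]
  have hker : LinearMap.ker k = B := by
    refine hBmax _ (fun b hb => hkB b hb) ?_
    rw [Submodule.disjoint_def]
    intro c hc hk
    rw [← hkC c (hSC hc)]; exact hk
  have hcom : B.comap k = B := by
    refine hBmax _ (fun b hb => by rw [Submodule.mem_comap, hkB b hb]; exact B.zero_mem) ?_
    rw [Submodule.disjoint_def]
    intro c hc hk
    rw [Submodule.mem_comap, hkC c (hSC hc)] at hk
    exact (Submodule.disjoint_def.1 hBC) _ hk (hSC hc)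
  have hran : LinearMap.range k = C := by
    refine hCmax _ (fun c hc => ⟨c, hkC c hc⟩) ?_
    rw [Submodule.disjoint_def]
    rintro _ hb ⟨e, rfl⟩
    have : e ∈ B.comap k := hb
    rw [hcom] at this
    exact hkB e this
  have hkmem : ∀ e, k e ∈ C := fun e => hran ▸ ⟨e, rfl⟩
  let k' : E →ₗ[R] C := k.codRestrict C hkmem
  have hk' : ∀ c : C, k' c.1 = c := fun c => Subtype.ext (hkC c.1 c.2)
  refine ⟨C, inferInstance, inferInstance, ⟨?_⟩, ⟨?_, ?_⟩, k' ∘ₗ φ0, ?_⟩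
  · intro X Y _ _ _ _ f hf g
    obtain ⟨u, hu⟩ := hE.out f hf (C.subtype ∘ₗ g)
    refine ⟨k' ∘ₗ u, fun x => ?_⟩
    rw [LinearMap.comp_apply, hu]
    exact hk' _
  · exact ⟨⟨⟨s, hSC hsS⟩, 0, fun h => hs0 (congrArg Subtype.val h)⟩⟩
  · intro A A' hAA
    have hess : ∀ A : Submodule R C, A ≠ ⊥ → (⟨s, hSC hsS⟩ : C) ∈ A := by
      intro A hA
      by_cases hd : Disjoint S (A.map C.subtype)
      · exfalso
        have hAC : A.map C.subtype ≤ C := Submodule.map_subtype_le C A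
        have h1 : B ⊔ A.map C.subtype = B := by
          refine hBmax _ le_sup_left ?_
          rw [Submodule.disjoint_def]
          intro y hy hy'
          obtain ⟨b, hb, a, ha, rfl⟩ := Submodule.mem_sup.1 hy'
          have hbC : b ∈ C := by
            have := C.sub_mem (hSC hy) (hAC ha)
            simpa using this
          have hb0 : b = 0 := (Submodule.disjoint_def.1 hBC) _ hb hbC
          subst hb0
          rw [zero_add] at hy ⊢
          exact (Submodule.disjoint_def.1 hd) _ hy ha
        apply hA
        rw [eq_bot_iff]
        intro a ha
        have haB : a.1 ∈ B := h1 ▸ (le_sup_right : A.map C.subtype ≤ _) ⟨a, ha, rfl⟩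
        exact Subtype.ext ((Submodule.disjoint_def.1 hBC) _ haB a.2)
      · have h2 : S ≤ A.map C.subtype := by
          by_contra hc
          exact hd (hS.not_le_iff_disjoint.1 hc)
        obtain ⟨a, ha, hae⟩ := h2 hsS
        have : a = ⟨s, hSC hsS⟩ := Subtype.ext hae
        exact this ▸ ha
    by_contra hcon
    push Not at hcon
    have := (Submodule.disjoint_def.1 hAA.disjoint) _ (hess A hcon.1) (hess A' hcon.2)
    exact hs0 (congrArg Subtype.val this)
  · rw [LinearMap.comp_apply, hφ0]
    intro h
    apply hs0
    rw [← hkC s (hSC hsS)]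
    exact congrArg Subtype.val h

theorem exists_inj_cogenerator : ∃ (E : Type u) (_ : AddCommGroup E) (_ : Module R E),
    Module.Injective R E ∧ IsCogenerator R E := by
  classical
  obtain ⟨E, _, _, hE, ι, hι⟩ := exists_injective_embedding (R := R)
    (∀ I : Submodule R R, R ⧸ I)
  refine ⟨E, _, _, hE, ?_⟩
  intro M N _ _ _ _ f hf
  obtain ⟨m, hm⟩ : ∃ m, f m ≠ 0 := by
    by_contra! hc
    exact hf (LinearMap.ext hc)
  let I := LinearMap.ker (LinearMap.toSpanSingleton R N (f m))
  let d : ∀ I : Submodule R R, R ⧸ I := Pi.single I (Submodule.Quotient.mk 1)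
  obtain ⟨φ, hφ⟩ := exists_extend_elt hE (f m) (ι d) (by
    intro r hr
    have h1 : r ∈ I := by simpa [I] using hr
    have : r • d = 0 := by
      rw [← Pi.single_smul, ← Submodule.Quotient.mk_smul, smul_eq_mul, mul_one,
        (Submodule.Quotient.mk_eq_zero I).2 h1, Pi.single_zero]
    rw [← map_smul, this, map_zero])
  refine ⟨φ, fun h => ?_⟩
  have h1 : ι d = 0 := by rw [← hφ]; exact LinearMap.congr_fun h m
  have h2 : d = 0 := hι (h1.trans (map_zero ι).symm)
  have h3 := congrFun h2 I
  simp only [d, Pi.single_eq_same, Pi.zero_apply] at h3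
  rw [Submodule.Quotient.mk_eq_zero] at h3
  exact hm (by simpa [I] using h3)

end HullPart
/-- Theorem 2.2: characterizations of right FP-injective rings. -/
theorem stmt_2 (R : Type u) [Ring R] :
    List.TFAE
      [FPInjective Rᵐᵒᵖ R,
       IsFPCogenerator R R,
       ∃ (K : Type u) (_ : AddCommGroup K) (_ : Module R K), FpFlat R K ∧ IsFPCogenerator R K,
       ∃ (K : Type u) (_ : AddCommGroup K) (_ : Module R K), FpFlat R K ∧ IsCogenerator R K,
       ∀ (M N : Type u) [AddCommGroup M] [Module R M] [AddCommGroup N] [Module R N],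
         Module.FinitePresentation R M → Module.FinitePresentation R N →
         ∀ α : M →ₗ[R] N, Surjective (fun f : N →ₗ[R] R => f ∘ₗ α) → Injective α,
       ∀ (M : Type u) [AddCommGroup M] [Module R M], Module.FinitePresentation R M →
         Injective (dualEval R M),
       ∀ (M : Type u) [AddCommGroup M] [Module R M], Module.FinitePresentation R M →
         ∃ (F : Type u) (_ : AddCommGroup F) (_ : Module R F),
           FpFlat R F ∧ ∃ f : M →ₗ[R] F, Injective f,
       ∀ (M : Type u) [AddCommGroup M] [Module R M],
         ∃ (F : Type u) (_ : AddCommGroup F) (_ : Module R F),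
           FpFlat R F ∧ ∃ f : M →ₗ[R] F, Injective f,
       ∀ (M : Type u) [AddCommGroup M] [Module R M], FPInjective R M → FpFlat R M,
       ∀ (M : Type u) [AddCommGroup M] [Module R M], Module.Injective R M → FpFlat R M,
       ∀ (M : Type u) [AddCommGroup M] [Module R M],
         Module.Injective R M → IndecModule R M → FpFlat R M,
       ∀ (M : Type u) [AddCommGroup M] [Module Rᵐᵒᵖ M], ModFlatRight R M →
         FpInjective Rᵐᵒᵖ M] := by
  have h1C : FPInjective Rᵐᵒᵖ R → CoreP R := fun h => CoreP.of_extProp (fpInjective_iff.1 h)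
  tfae_have 1 → 6 := fun h M _ _ hM => by
    rw [injective_iff_map_eq_zero]
    intro v hv
    exact (h1C h).semirefl M v (fun f => LinearMap.congr_fun hv f)
  have h6C : (∀ (M : Type u) [AddCommGroup M] [Module R M], Module.FinitePresentation R M →
         Injective (dualEval R M)) → CoreP R := fun h => CoreP.of_semirefl fun N _ _ hN v hv =>
    (injective_iff_map_eq_zero _).1 (h N hN) v (LinearMap.ext hv)
  have hC1 : CoreP R → FPInjective Rᵐᵒᵖ R := fun h => fpInjective_iff.2 h.extProp
  tfae_have 6 → 1 := fun h => hC1 (h6C h)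
  tfae_have 1 → 2 := by
    intro h M N _ _ _ _ _ hN f hf
    obtain ⟨m, hm⟩ : ∃ m, f m ≠ 0 := by
      by_contra! hc
      exact hf (LinearMap.ext hc)
    by_contra! hc
    exact hm ((h1C h).semirefl N (f m) fun g => LinearMap.congr_fun (hc g) m)
  tfae_have 2 → 3 := fun h => ⟨R, inferInstance, inferInstance, fpFlat_self, h⟩
  tfae_have 3 → 1 := by
    rintro ⟨K, _, _, hK, hc⟩
    refine hC1 (CoreP.of_semirefl fun N _ _ hN v hv => ?_)
    by_contra hv0
    obtain ⟨g, hg⟩ := hc R N inferInstance hN (LinearMap.toSpanSingleton R N v) (fun h => hv0 (by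
      simpa using LinearMap.congr_fun h 1))
    apply hg
    ext
    simpa using key_flat hK g v hv
  tfae_have 4 → 3 := by
    rintro ⟨K, _, _, hK, hc⟩
    exact ⟨K, _, _, hK, fun M N _ _ _ _ _ _ f hf => hc M N f hf⟩
  tfae_have 6 → 5 := by
    intro h M N _ _ _ _ hM hN α hα
    rw [injective_iff_map_eq_zero]
    intro v hv
    refine (injective_iff_map_eq_zero _).1 (h M hM) v (LinearMap.ext fun f => ?_)
    obtain ⟨g, rfl⟩ := hα f
    change g (α v) = 0
    rw [hv, map_zero]
  tfae_have 5 → 1 := by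
    intro h
    refine hC1 (CoreP.of_semirefl fun N _ _ hN v hv => ?_)
    let K := Submodule.span R {v}
    have hF : Module.FinitePresentation R (N ⧸ K) :=
      Module.finitePresentation_of_surjective K.mkQ K.mkQ_surjective
        (by rw [K.ker_mkQ]; exact Submodule.fg_span_singleton v)
    have := h N (N ⧸ K) hN hF K.mkQ (fun f => ⟨K.liftQ f (by
      rw [Submodule.span_le, Set.singleton_subset_iff]; exact hv f), K.liftQ_mkQ f _⟩)
    refine (injective_iff_map_eq_zero _).1 this v ?_
    rw [← LinearMap.mem_ker, K.ker_mkQ]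
    exact Submodule.mem_span_singleton_self v
  tfae_have 1 → 9 := fun h M _ _ hM => (h1C h).fpFlat (fpInjective_iff.1 hM)
  tfae_have 9 → 10 := fun h M _ _ hM => h M (fpInjective_iff.2 (ExtProp.of_injective hM))
  tfae_have 10 → 8 := by
    intro h M _ _
    obtain ⟨E, _, _, hE, f, hf⟩ := exists_injective_embedding (R := R) M
    exact ⟨E, _, _, h E hE, f, hf⟩
  tfae_have 8 → 7 := fun h M _ _ _ => h M
  tfae_have 7 → 1 := by
    intro h
    refine hC1 (CoreP.of_semirefl fun N _ _ hN v hv => ?_)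
    obtain ⟨F, _, _, hF, f, hf⟩ := h N hN
    exact (injective_iff_map_eq_zero _).1 hf v (key_flat hF f v hv)
  tfae_have 10 → 4 := by
    intro h
    obtain ⟨E, _, _, hE, hc⟩ := exists_inj_cogenerator (R := R)
    exact ⟨E, _, _, h E hE, hc⟩
  tfae_have 10 → 11 := fun h M _ _ hM _ => h M hM
  tfae_have 11 → 1 := by
    intro h
    refine hC1 (CoreP.of_semirefl fun N _ _ hN v hv => ?_)
    by_contra hv0
    obtain ⟨C, _, _, hC, hi, φ, hφ⟩ := exists_indec (R := R) v hv0
    exact hφ (key_flat (h C hC hi) φ v hv)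
  tfae_have 1 → 12 := fun h M _ _ hM => (h1C h).fpInjective_of_flat hM
  tfae_have 12 → 1 := fun h => hC1 (CoreP.of_fpInj (h R modFlatRight_self))
  tfae_finish
end

section
/- For a ring R the following are equivalent: (1) R is a left IF-ring; (2) every finitely presented left R-module embeds in a flat left R-module; (3) every FP-injective left R-module is flat; (4) every injective left R-module is flat. -/
/-!
Common definitions: rings are associative with identity, not necessarily commutative.
Left `R`-modules are `Module R M`; right `R`-modules are `Module Rᵐᵒᵖ M`.
-/

universe u

open MulOpposite Function Pointwise

open CategoryTheory in
theorem aux_extVanish_iff (R : Type u) [Ring R] (F M : Type u) [AddCommGroup F] [Module R F]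
    [AddCommGroup M] [Module R M] (Q : ProjectiveResolution (ModuleCat.of R F)) :
    ExtVanish R F M ↔ ∀ f : Q.complex.X 1 ⟶ ModuleCat.of R M, Q.complex.d 2 1 ≫ f = 0 →
      ∃ g : Q.complex.X 0 ⟶ ModuleCat.of R M, Q.complex.d 1 0 ≫ g = f := by
  have h1 : ExtVanish R F M ↔ Limits.IsZero (((Ext ℤ (ModuleCat.{u} R) 1).obj
      (Opposite.op (ModuleCat.of R F))).obj (ModuleCat.of R M)) :=
    ⟨fun h => by
        have : Subsingleton _ := h
        exact ModuleCat.isZero_of_subsingleton _,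
      fun h => ModuleCat.subsingleton_of_isZero h⟩
  rw [h1, (Q.isoExt (R := ℤ) 1 (ModuleCat.of R M)).isZero_iff,
    ← HomologicalComplex.exactAt_iff_isZero_homology,
    HomologicalComplex.exactAt_iff' _ 0 1 2 (by simp) (by simp),
    ShortComplex.moduleCat_exact_iff]
  constructor
  · intro h f hf
    exact h f hf
  · intro h f hf
    exact h f hf

open CategoryTheory in
theorem aux_fpinj_of_inj (R : Type u) [Ring R] (M : Type u)
    [AddCommGroup M] [Module R M] (hM : Module.Injective R M) : FPInjective R M := by
  intro F _ _ _
  let Q : ProjectiveResolution (ModuleCat.of R F) := ProjectiveResolution.of _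
  rw [aux_extVanish_iff R F M Q]
  intro f hf
  have := (Module.injective_iff_injective_object R M).1 hM
  have hex := Q.exact_succ 0
  exact ⟨hex.descToInjective f hf, hex.comp_descToInjective f hf⟩

open CategoryTheory in
theorem aux_extend (R : Type u) [Ring R] (M L : Type u)
    [AddCommGroup M] [Module R M] [AddCommGroup L] [Module R L] [Module.Projective R L]
    (P : Submodule R L) (h : ExtVanish R (L ⧸ P) M) (p : P →ₗ[R] M) :
    ∃ q : L →ₗ[R] M, ∀ x : P, q x = p x := by
  let Q : ProjectiveResolution (ModuleCat.of R (L ⧸ P)) := ProjectiveResolution.of _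
  rw [aux_extVanish_iff R _ M Q] at h
  let ε : Q.complex.X 0 ⟶ ModuleCat.of R (L ⧸ P) := Q.π.f 0
  have hε : Epi ε := inferInstanceAs (Epi (Q.π.f 0))
  have hε' : Surjective ε.hom := (ModuleCat.epi_iff_surjective _).1 hε
  have hd : Q.complex.d 1 0 ≫ ε = 0 := Q.complex_d_comp_π_f_zero
  have hex : ∀ y : Q.complex.X 0, ε.hom y = 0 → ∃ z : Q.complex.X 1, (Q.complex.d 1 0).hom z = y :=
    (ShortComplex.moduleCat_exact_iff _).1 Q.exact₀
  have hproj : Module.Projective R (Q.complex.X 0) := by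
    have := Q.projective 0
    exact (IsProjective.iff_projective _).2 this
  obtain ⟨lam, hlam⟩ := Module.projective_lifting_property P.mkQ ε.hom P.mkQ_surjective
  obtain ⟨bet, hbet⟩ := Module.projective_lifting_property ε.hom P.mkQ hε'
  have hlam' : ∀ x, P.mkQ (lam x) = ε.hom x := fun x => LinearMap.congr_fun hlam x
  have hbet' : ∀ x, ε.hom (bet x) = P.mkQ x := fun x => LinearMap.congr_fun hbet x
  have hd' : ∀ x, ε.hom ((Q.complex.d 1 0).hom x) = 0 := fun x => by
    have := LinearMap.congr_fun (congrArg ModuleCat.Hom.hom hd) x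
    simpa using this
  let alp : Q.complex.X 1 →ₗ[R] P := LinearMap.codRestrict P (lam ∘ₗ (Q.complex.d 1 0).hom)
    (fun x => by
      have := hlam' ((Q.complex.d 1 0).hom x)
      rw [hd'] at this
      simpa using this)
  let sig : L →ₗ[R] P := LinearMap.codRestrict P (LinearMap.id - lam ∘ₗ bet)
    (fun x => by
      refine (Submodule.Quotient.mk_eq_zero P).1 ?_
      change P.mkQ (x - lam (bet x)) = 0
      rw [map_sub, hlam', hbet', sub_self])
  obtain ⟨g, hg⟩ := h (ModuleCat.ofHom (p ∘ₗ alp)) (by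
    ext x
    have h0 : (Q.complex.d 1 0).hom ((Q.complex.d 2 1).hom x) = 0 := by
      have := LinearMap.congr_fun (congrArg ModuleCat.Hom.hom (Q.complex.d_comp_d 2 1 0)) x
      exact this
    have h1 : alp ((Q.complex.d 2 1).hom x) = 0 := by
      apply Subtype.ext
      change lam ((Q.complex.d 1 0).hom ((Q.complex.d 2 1).hom x)) = 0
      rw [h0, map_zero]
    change p (alp ((Q.complex.d 2 1).hom x)) = 0
    rw [h1, map_zero])
  have hg' : ∀ z, g.hom ((Q.complex.d 1 0).hom z) = p (alp z) := fun z =>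
    LinearMap.congr_fun (congrArg ModuleCat.Hom.hom hg) z
  refine ⟨g.hom ∘ₗ bet + p ∘ₗ sig, fun x => ?_⟩
  obtain ⟨z, hz⟩ := hex (bet x) (by rw [hbet']; simp)
  have h2 : sig x = x - alp z := by
    apply Subtype.ext
    change (x : L) - lam (bet x) = x - lam ((Q.complex.d 1 0).hom z)
    rw [hz]
  have h3 : g.hom (bet x) = p (alp z) := by rw [← hz, hg']
  change g.hom (bet x) + p (sig x) = p x
  rw [h2, h3, map_sub]
  abel

open CategoryTheory in
theorem aux_embed_inj (R : Type u) [Ring R] (M : Type u) [AddCommGroup M] [Module R M] :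
    ∃ (F : Type u) (_ : AddCommGroup F) (_ : Module R F),
      Module.Injective R F ∧ ∃ f : M →ₗ[R] F, Function.Injective f := by
  let J := Injective.under (ModuleCat.of R M)
  refine ⟨J, inferInstance, inferInstance, ?_, (Injective.ι (ModuleCat.of R M)).hom, ?_⟩
  · have : CategoryTheory.Injective (ModuleCat.of R J) := inferInstanceAs (CategoryTheory.Injective J)
    exact Module.injective_module_of_injective_object R J
  · exact (ModuleCat.mono_iff_injective _).1 inferInstance

section TensorAPI

variable (R : Type u) [Ring R] {K L M : Type u} [AddCommGroup K] [Module Rᵐᵒᵖ K]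
  [AddCommGroup L] [Module Rᵐᵒᵖ L] [AddCommGroup M] [Module R M]

/-- The quotient map. -/
def ncMk : FreeAbelianGroup (K × M) →+ NCTensor R K M :=
  QuotientAddGroup.mk' (TensorRels R K M)

theorem ncMk_eq_zero {x : FreeAbelianGroup (K × M)} (hx : x ∈ TensorRels R K M) :
    ncMk R x = 0 :=
  (QuotientAddGroup.eq_zero_iff _).2 hx

/-- Pure tensors, as a biadditive map. -/
def ncT : K →+ M →+ NCTensor R K M :=
  AddMonoidHom.mk' (fun k => AddMonoidHom.mk' (fun m => ncMk R (FreeAbelianGroup.of (k, m)))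
    (fun m₁ m₂ => by
      rw [← sub_eq_zero, ← sub_sub, ← map_sub, ← map_sub]
      exact ncMk_eq_zero R
        (AddSubgroup.subset_closure (Or.inl (Or.inr ⟨k, m₁, m₂, rfl⟩)))))
    (fun k₁ k₂ => by
      ext m
      change ncMk R (FreeAbelianGroup.of (k₁ + k₂, m)) =
        ncMk R (FreeAbelianGroup.of (k₁, m)) + ncMk R (FreeAbelianGroup.of (k₂, m))
      rw [← sub_eq_zero, ← sub_sub, ← map_sub, ← map_sub]
      exact ncMk_eq_zero R
        (AddSubgroup.subset_closure (Or.inl (Or.inl ⟨k₁, k₂, m, rfl⟩))))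

theorem ncT_smul (r : R) (k : K) (m : M) : ncT R (op r • k) m = ncT R k (r • m) := by
  change ncMk R (FreeAbelianGroup.of (op r • k, m)) = ncMk R (FreeAbelianGroup.of (k, r • m))
  rw [← sub_eq_zero, ← map_sub]
  exact ncMk_eq_zero R (AddSubgroup.subset_closure (Or.inr ⟨r, k, m, rfl⟩))

/-- Universal property. -/
def ncLift {A : Type u} [AddCommGroup A] (f : K →+ M →+ A)
    (hf : ∀ (r : R) k m, f (op r • k) m = f k (r • m)) : NCTensor R K M →+ A :=
  QuotientAddGroup.lift (TensorRels R K M)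
    (FreeAbelianGroup.lift fun p : K × M => f p.1 p.2)
    (by
      intro x hx
      refine (AddSubgroup.closure_le (AddMonoidHom.ker _)).2 ?_ hx
      rintro x ((⟨k₁, k₂, m, rfl⟩ | ⟨k, m₁, m₂, rfl⟩) | ⟨r, k, m, rfl⟩) <;>
        simp [AddMonoidHom.mem_ker, hf])

theorem ncLift_ncT {A : Type u} [AddCommGroup A] (f : K →+ M →+ A)
    (hf : ∀ (r : R) k m, f (op r • k) m = f k (r • m)) (k : K) (m : M) :
    ncLift R f hf (ncT R k m) = f k m := by
  change FreeAbelianGroup.lift (fun p : K × M => f p.1 p.2) (FreeAbelianGroup.of (k, m)) = _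
  simp

theorem tensorCongr_ncT (μ : K →ₗ[Rᵐᵒᵖ] L) (k : K) (m : M) :
    tensorCongr R μ (LinearMap.id : M →ₗ[R] M) (ncT R k m) = ncT R (μ k) m := by
  change ncMk R (FreeAbelianGroup.lift
    (fun p : K × M => FreeAbelianGroup.of (μ p.1, (LinearMap.id : M →ₗ[R] M) p.2))
      (FreeAbelianGroup.of (k, m))) = _
  simp
  rfl

/-- The map `(M →₀ K) → K ⊗ M`. -/
noncomputable def ncSum : (M →₀ K) →+ NCTensor R K M :=
  Finsupp.liftAddHom (fun x => (ncT R).flip x)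

theorem ncSum_single (x : M) (k : K) : ncSum R (Finsupp.single x k) = ncT R k x := by
  simp [ncSum]

theorem ncSum_surj : Surjective (ncSum R : (M →₀ K) →+ NCTensor R K M) := by
  intro t
  obtain ⟨z, rfl⟩ := QuotientAddGroup.mk'_surjective (TensorRels R K M) t
  induction z using FreeAbelianGroup.induction_on with
  | zero => exact ⟨0, by simp; rfl⟩
  | of p => exact ⟨Finsupp.single p.2 p.1, ncSum_single R _ _⟩
  | neg p ih =>
    obtain ⟨w, hw⟩ := ih
    exact ⟨-w, by rw [map_neg, hw]; rfl⟩
  | add x y hx hy =>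
    obtain ⟨w, hw⟩ := hx
    obtain ⟨w', hw'⟩ := hy
    exact ⟨w + w', by rw [map_add, hw, hw']; rfl⟩

/-- Elements of `M →₀ L` vanishing because of finitely many relations. -/
def relSub : AddSubgroup (M →₀ L) where
  carrier := {w | ∃ C : Finset (M →₀ R), (∀ c ∈ C, Finsupp.linearCombination R id c = 0) ∧
    ∀ b : M → R, (∀ c ∈ C, Finsupp.linearCombination R b c = 0) →
      Finsupp.liftAddHom (fun x => DistribSMul.toAddMonoidHom L (op (b x))) w = 0}
  zero_mem' := ⟨∅, by simp, by simp⟩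
  add_mem' := by
    classical
    rintro w w' ⟨C, h1, h2⟩ ⟨C', h1', h2'⟩
    refine ⟨C ∪ C', ?_, fun b hb => ?_⟩
    · intro c hc
      rcases Finset.mem_union.1 hc with h | h
      exacts [h1 c h, h1' c h]
    · rw [map_add, h2 b fun c hc => hb c (Finset.mem_union_left _ hc),
        h2' b fun c hc => hb c (Finset.mem_union_right _ hc), add_zero]
  neg_mem' := by
    rintro w ⟨C, h1, h2⟩
    exact ⟨C, h1, fun b hb => by rw [map_neg, h2 b hb, neg_zero]⟩

/-- The comparison map `L ⊗ M → (M →₀ L) / relSub`. -/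
noncomputable def relMap : NCTensor R L M →+ (M →₀ L) ⧸ (relSub R : AddSubgroup (M →₀ L)) :=
  ncLift R
    (AddMonoidHom.mk' (fun l => AddMonoidHom.mk'
      (fun m => QuotientAddGroup.mk' (relSub R : AddSubgroup (M →₀ L)) (Finsupp.single m l))
      (fun m₁ m₂ => by
        rw [← sub_eq_zero, ← sub_sub, ← map_sub, ← map_sub]
        refine (QuotientAddGroup.eq_zero_iff _).2 ⟨{Finsupp.single (m₁ + m₂) 1 -
          Finsupp.single m₁ 1 - Finsupp.single m₂ 1}, ?_, ?_⟩
        · simp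
        · intro b hb
          have := hb _ (Finset.mem_singleton_self _)
          simp only [map_sub, Finsupp.linearCombination_single, one_smul] at this
          have h3 : b (m₁ + m₂) = b m₁ + b m₂ := by
            rw [sub_sub, sub_eq_zero] at this; exact this
          rw [map_sub, map_sub, Finsupp.liftAddHom_apply_single,
            Finsupp.liftAddHom_apply_single, Finsupp.liftAddHom_apply_single]
          simp [h3, add_smul]))
      (fun l₁ l₂ => by
        ext m
        simp [Finsupp.single_add]))
    (by
      intro r l m
      simp only [AddMonoidHom.mk'_apply]
      rw [← sub_eq_zero, ← map_sub]
      refine (QuotientAddGroup.eq_zero_iff _).2 ⟨{Finsupp.single m r -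
          Finsupp.single (r • m) 1}, ?_, ?_⟩
      · simp
      · intro b hb
        have := hb _ (Finset.mem_singleton_self _)
        simp only [map_sub, Finsupp.linearCombination_single, smul_eq_mul, one_mul] at this
        have h3 : b (r • m) = r * b m := by
          rw [sub_eq_zero] at this; exact this.symm
        rw [map_sub, Finsupp.liftAddHom_apply_single, Finsupp.liftAddHom_apply_single]
        simp [h3, mul_smul])

theorem relMap_ncSum (w : M →₀ L) : relMap R (ncSum R w) = QuotientAddGroup.mk' (relSub R) w := by
  induction w using Finsupp.induction_linear with
  | zero => simp
  | add f g hf hg => rw [map_add, map_add, hf, hg, map_add]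
  | single x l =>
    rw [ncSum_single, relMap, ncLift_ncT]
    rfl

end TensorAPI

/-- Every map from a finitely presented module factors through a f.g. free module. -/
def Fac (R : Type u) [Ring R] (M : Type u) [AddCommGroup M] [Module R M] : Prop :=
  ∀ (P : Type u) [AddCommGroup P] [Module R P], Module.FinitePresentation R P →
    ∀ f : P →ₗ[R] M, ∃ (ι : Type) (_ : Fintype ι) (g : P →ₗ[R] (ι → R)) (h : (ι → R) →ₗ[R] M),
      h ∘ₗ g = f

theorem flat_of_fac (R : Type u) [Ring R] (M : Type u) [AddCommGroup M] [Module R M]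
    (hM : Fac R M) : ModFlat R M := by
  classical
  intro K L _ _ _ _ μ hμ
  rw [injective_iff_map_eq_zero]
  intro t ht
  obtain ⟨v, rfl⟩ := ncSum_surj R t
  have h1 : ∀ v : M →₀ K, tensorCongr R μ (LinearMap.id : M →ₗ[R] M) (ncSum R v) =
      ncSum R (Finsupp.mapRange.addMonoidHom μ.toAddMonoidHom v) := by
    intro v
    induction v using Finsupp.induction_linear with
    | zero => simp
    | add f g hf hg => rw [map_add, map_add, hf, hg, ← map_add, ← map_add]
    | single x l => simp [ncSum_single, tensorCongr_ncT]
  rw [h1] at ht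
  have h2 := relMap_ncSum R (Finsupp.mapRange.addMonoidHom μ.toAddMonoidHom v)
  rw [ht, map_zero] at h2
  obtain ⟨C, hC, hC'⟩ := (QuotientAddGroup.eq_zero_iff _).1 h2.symm
  let T : Finset M := v.support ∪ C.biUnion Finsupp.support
  let res : (M →₀ R) → (T → R) := fun c x => c x
  let N : Submodule R (T → R) := Submodule.span R (Set.range fun c : C => res c)
  have hfp : Module.FinitePresentation R ((T → R) ⧸ N) :=
    Module.finitePresentation_of_surjective N.mkQ N.mkQ_surjective (by
      rw [Submodule.ker_mkQ]
      exact Submodule.fg_span (Set.finite_range _))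
  have hsum : ∀ c ∈ C, ∀ {A : Type u} [AddCommGroup A] [Module R A] (b : M → A),
      Finsupp.linearCombination R b c = ∑ x : T, res c x • b x := by
    intro c hc A _ _ b
    rw [Finsupp.linearCombination_apply, Finsupp.sum_of_support_subset c (s := T)
      ((Finset.subset_biUnion_of_mem Finsupp.support hc).trans Finset.subset_union_right) _
      (by simp)]
    exact (Finset.sum_coe_sort T (fun x => c x • b x)).symm
  let f : ((T → R) ⧸ N) →ₗ[R] M := N.liftQ (Fintype.linearCombination R (fun x : T => x.1)) (by
    refine Submodule.span_le.2 ?_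
    rintro _ ⟨c, rfl⟩
    have := hC c c.2
    rw [hsum c c.2] at this
    simpa [Fintype.linearCombination_apply] using this)
  obtain ⟨ι, _, g, h, hgh⟩ := hM _ hfp f
  let G : (T → R) →ₗ[R] (ι → R) := g ∘ₗ N.mkQ
  let b : ι → M → R := fun s x => if hx : x ∈ T then G (Pi.single ⟨x, hx⟩ 1) s else 0
  let y : ι → M := fun s => h (Pi.single s 1)
  have e1 : ∀ x ∈ T, x = ∑ s, b s x • y s := by
    intro x hx
    have e : h (G (Pi.single ⟨x, hx⟩ 1)) = x := by
      have : (h ∘ₗ g) (N.mkQ (Pi.single ⟨x, hx⟩ 1)) = x := by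
        rw [hgh]
        simp [f]
      exact this
    conv_lhs => rw [← e, LinearMap.pi_apply_eq_sum_univ h]
    refine Finset.sum_congr rfl fun s _ => ?_
    simp only [b, dif_pos hx, y]
    congr 2
    ext j
    simp [Pi.single_apply, eq_comm]
  have e2 : ∀ s, ∀ c ∈ C, Finsupp.linearCombination R (b s) c = 0 := by
    intro s c hc
    rw [hsum c hc]
    have e : G (res c) = 0 := by
      have : N.mkQ (res c) = 0 := by
        refine (Submodule.Quotient.mk_eq_zero N).2 (Submodule.subset_span ⟨⟨c, hc⟩, rfl⟩)
      simp [G, this]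
    have e5 : G (res c) = ∑ x, res c x • G (Pi.single x 1) := by
      rw [LinearMap.pi_apply_eq_sum_univ G]
      refine Finset.sum_congr rfl fun i _ => ?_
      congr 2
      ext j
      simp [Pi.single_apply, eq_comm]
    rw [e5] at e
    have e6 := congrFun e s
    rw [Finset.sum_apply] at e6
    rw [← show _ = (0 : R) from e6]
    refine Finset.sum_congr rfl fun x _ => ?_
    simp only [b, dif_pos x.2, Pi.smul_apply]
  have e3 : ∀ s, (Finsupp.liftAddHom (fun x => DistribSMul.toAddMonoidHom K (op (b s x)))) v = 0 := by
    intro s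
    apply hμ
    rw [map_zero, ← hC' (b s) (e2 s)]
    simp only [Finsupp.liftAddHom_apply, Finsupp.mapRange.addMonoidHom_apply]
    rw [Finsupp.sum_mapRange_index (by simp), Finsupp.sum, map_sum]
    simp [Finsupp.sum]
  have e4 : ncSum R v = ∑ s, ncT R
      ((Finsupp.liftAddHom (fun x => DistribSMul.toAddMonoidHom K (op (b s x)))) v) (y s) := by
    simp only [ncSum, Finsupp.liftAddHom_apply, Finsupp.sum, map_sum, AddMonoidHom.finsetSum_apply]
    rw [Finset.sum_comm]
    refine Finset.sum_congr rfl fun x hx => ?_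
    have : ncT R (v x) x = ncT R (v x) (∑ s, b s x • y s) :=
      congrArg _ (e1 x (Finset.mem_union_left _ hx))
    rw [AddMonoidHom.flip_apply, this, map_sum]
    refine Finset.sum_congr rfl fun s _ => ?_
    rw [← ncT_smul]
    rfl
  rw [e4]
  simp [e3]

theorem fac_of_flat (R : Type u) [Ring R] (M : Type u) [AddCommGroup M] [Module R M]
    (hM : ModFlat R M) : Fac R M := by
  classical
  intro P _ _ hP f
  obtain ⟨n, N, e, hN⟩ := Module.FinitePresentation.exists_fin R P
  obtain ⟨m, a, ha⟩ := Submodule.fg_iff_exists_fin_generating_family.1 hN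
  let F : (Fin n → R) →ₗ[R] M := f ∘ₗ e.symm.toLinearMap ∘ₗ N.mkQ
  let x : Fin n → M := fun i => F (Pi.single i 1)
  have hF : ∀ w, F w = ∑ i, w i • x i := by
    intro w
    rw [LinearMap.pi_apply_eq_sum_univ F]
    refine Finset.sum_congr rfl fun i _ => ?_
    congr 2
    ext j
    simp [Pi.single_apply, eq_comm]
  have hx : ∀ j, ∑ i, a j i • x i = 0 := by
    intro j
    rw [← hF]
    have : N.mkQ (a j) = 0 := by
      refine (Submodule.Quotient.mk_eq_zero N).2 ?_
      rw [← ha]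
      exact Submodule.subset_span ⟨j, rfl⟩
    simp only [F, LinearMap.comp_apply, this, map_zero]
  let φ : (Fin n → R) →ₗ[Rᵐᵒᵖ] (Fin m → R) :=
    { toFun := fun b j => ∑ i, a j i * b i
      map_add' := fun b c => by
        ext j
        simp [mul_add, Finset.sum_add_distrib]
      map_smul' := fun r b => by
        ext j
        simp [Finset.sum_mul, mul_assoc] }
  let S : AddSubgroup (Fin n → M) :=
    { carrier := {v | ∃ (ι : Type) (_ : Fintype ι) (k : ι → Fin n → R) (y : ι → M),
        (∀ s, φ (k s) = 0) ∧ ∀ i, v i = ∑ s, k s i • y s}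
      zero_mem' := ⟨Empty, inferInstance, fun s => s.elim, fun s => s.elim, fun s => s.elim,
        by simp⟩
      add_mem' := by
        rintro v v' ⟨ι, _, k, y, h1, h2⟩ ⟨ι', _, k', y', h1', h2'⟩
        refine ⟨ι ⊕ ι', inferInstance, Sum.elim k k', Sum.elim y y', ?_, fun i => ?_⟩
        · rintro (s | s)
          exacts [h1 s, h1' s]
        · simp [h2, h2']
      neg_mem' := by
        rintro v ⟨ι, _, k, y, h1, h2⟩
        exact ⟨ι, inferInstance, k, -y, h1, fun i => by simp [h2]⟩ }
  let B : (Fin n → R) →+ M →+ (Fin n → M) ⧸ S :=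
    AddMonoidHom.mk' (fun k => AddMonoidHom.mk'
      (fun y => QuotientAddGroup.mk' S (fun i => k i • y))
      (fun y y' => by
        rw [← map_add]
        congr 1
        ext i
        simp))
      (fun k k' => by
        ext y
        simp only [AddMonoidHom.mk'_apply, AddMonoidHom.add_apply]
        rw [← map_add]
        congr 1
        ext i
        simp [add_smul])
  have hB : ∀ k y, B k y = QuotientAddGroup.mk' S (fun i => k i • y) := fun _ _ => rfl
  have hB0 : ∀ k, φ k = 0 → B k = 0 := by
    intro k hk
    ext y
    exact (QuotientAddGroup.eq_zero_iff _).2 ⟨Unit, inferInstance, fun _ => k, fun _ => y,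
      fun _ => hk, by simp⟩
  have hB1 : ∀ k k', φ k = φ k' → B k = B k' := by
    intro k k' h
    have h1 : B k = B (k - k') + B k' := by rw [← map_add, sub_add_cancel]
    have h2 : B (k - k') = 0 := hB0 _ (by rw [map_sub, h, sub_self])
    ext y
    rw [h1, h2]
    change 0 + B k' y = B k' y
    rw [zero_add]
  let I := LinearMap.range φ
  have hc : ∀ w : I, ∃ k, φ k = w := fun w => w.2
  choose c hc using hc
  let B' : I →+ M →+ (Fin n → M) ⧸ S := AddMonoidHom.mk' (fun w => B (c w)) (fun w w' => by
    rw [← map_add]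
    exact hB1 _ _ (by rw [map_add, hc, hc, hc]; rfl))
  have hB' : ∀ k, B' ⟨φ k, k, rfl⟩ = B k := fun k => hB1 _ _ (hc _)
  let Λ := ncLift R B' (by
    intro r w y
    have : B' (op r • w) = B (op r • c w) := hB1 _ _ (by rw [hc, map_smul, hc]; rfl)
    rw [this, hB]
    change _ = B (c w) (r • y)
    rw [hB]
    congr 1
    ext i
    simp [mul_smul])
  let t : NCTensor R I M := ∑ i, ncT R (⟨φ (Pi.single i 1), _, rfl⟩ : I) (x i)
  have ht : t = 0 := by
    apply hM I (Fin m → R) I.subtype I.injective_subtype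
    rw [map_zero, map_sum]
    simp only [tensorCongr_ncT]
    have : ∀ i, ncT R (I.subtype ⟨φ (Pi.single i 1), _, rfl⟩) (x i) =
        ∑ j, ncT R (Pi.single j (1 : R) : Fin m → R) (a j i • x i) := by
      intro i
      have h1 : (I.subtype ⟨φ (Pi.single i 1), _, rfl⟩ : Fin m → R) =
          ∑ j, op (a j i) • (Pi.single j (1 : R) : Fin m → R) := by
        ext j
        simp [φ, Pi.single_apply]
      rw [h1, map_sum, AddMonoidHom.finsetSum_apply]
      simp only [ncT_smul]
    rw [Finset.sum_congr rfl fun i _ => this i, Finset.sum_comm]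
    simp only [← map_sum, hx, map_zero, Finset.sum_const_zero]
  have hΛ : Λ t = QuotientAddGroup.mk' S x := by
    simp only [t, map_sum, Λ, ncLift_ncT, hB', hB]
    rw [← map_sum]
    congr 1
    ext i
    simp [Pi.single_apply]
  rw [ht, map_zero] at hΛ
  obtain ⟨ι, _, k, y, hk, hy⟩ := (QuotientAddGroup.eq_zero_iff _).1 hΛ.symm
  let G : (Fin n → R) →ₗ[R] (ι → R) := Fintype.linearCombination R (fun i s => k s i)
  have hG : N ≤ LinearMap.ker G := by
    rw [← ha, Submodule.span_le]
    rintro _ ⟨j, rfl⟩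
    change G (a j) = 0
    ext s
    have := congrFun (hk s) j
    simpa [G, Fintype.linearCombination_apply, φ] using this
  let H : (ι → R) →ₗ[R] M := Fintype.linearCombination R y
  refine ⟨ι, inferInstance, N.liftQ G hG ∘ₗ e.toLinearMap, H, ?_⟩
  have key : ∀ w, H (G w) = F w := by
    have : H ∘ₗ G = F := by
      refine LinearMap.pi_ext' fun i => LinearMap.ext_ring ?_
      change H (G (Pi.single i 1)) = x i
      rw [hy i]
      simp [G, H, Fintype.linearCombination_apply]
    exact fun w => LinearMap.congr_fun this w
  ext p
  obtain ⟨w, hw⟩ := N.mkQ_surjective (e p)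
  have h1 : p = e.symm (N.mkQ w) := by rw [hw]; simp
  change H (N.liftQ G hG (e p)) = f p
  rw [← hw]
  change H (G w) = _
  rw [key, h1]
  rfl

/-- A linear map from a finite module to a free module factors through a f.g. free one. -/
theorem fac_free (R : Type u) [Ring R] (ι : Type u) (P : Type u) [AddCommGroup P] [Module R P]
    [Module.Finite R P] (f : P →ₗ[R] (ι →₀ R)) :
    ∃ (κ : Type) (_ : Fintype κ) (g : P →ₗ[R] (κ → R)) (h : (κ → R) →ₗ[R] (ι →₀ R)),
      h ∘ₗ g = f := by
  classical
  obtain ⟨s, hs⟩ := (Module.Finite.fg_top : (⊤ : Submodule R P).FG)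
  let T : Finset ι := s.biUnion fun p => (f p).support
  have hT : ∀ p, ((f p).support : Set ι) ⊆ T := by
    intro p
    have hp : p ∈ Submodule.span R (s : Set P) := hs ▸ Submodule.mem_top
    have hle : Submodule.span R (s : Set P) ≤ (Finsupp.supported R R (T : Set ι)).comap f := by
      refine Submodule.span_le.2 fun q hq => ?_
      change f q ∈ Finsupp.supported R R (T : Set ι)
      rw [Finsupp.mem_supported]
      exact_mod_cast Finset.subset_biUnion_of_mem (fun p => (f p).support) hq
    exact (Finsupp.mem_supported R _).1 (hle hp)
  let eT := T.equivFin
  let g : P →ₗ[R] (Fin T.card → R) :=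
    LinearMap.pi fun i => Finsupp.lapply (eT.symm i : ι) ∘ₗ f
  let h : (Fin T.card → R) →ₗ[R] (ι →₀ R) :=
    Fintype.linearCombination R fun i => Finsupp.single (eT.symm i : ι) (1 : R)
  refine ⟨Fin T.card, inferInstance, g, h, ?_⟩
  ext p j
  have h1 : h (g p) = f p := by
    simp only [h, g, Fintype.linearCombination_apply, LinearMap.pi_apply, LinearMap.comp_apply,
      Finsupp.lapply_apply, Finsupp.smul_single, smul_eq_mul, mul_one]
    rw [eT.symm.sum_comp (fun x : T => Finsupp.single (x : ι) (f p x)),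
      Finset.sum_coe_sort T (fun x => Finsupp.single x (f p x))]
    conv_rhs => rw [← Finsupp.sum_single (f p)]
    exact (Finsupp.sum_of_support_subset _ (by exact_mod_cast hT p) _ (by simp)).symm
  exact DFunLike.congr_fun h1 j

/-- Proposition 2.5: characterizations of left IF-rings. -/
theorem stmt_6 (R : Type u) [Ring R] :
    List.TFAE
      [LeftIF R,
       ∀ (M : Type u) [AddCommGroup M] [Module R M], Module.FinitePresentation R M →
         ∃ (F : Type u) (_ : AddCommGroup F) (_ : Module R F),
           ModFlat R F ∧ ∃ f : M →ₗ[R] F, Injective f,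
       ∀ (M : Type u) [AddCommGroup M] [Module R M], FPInjective R M → ModFlat R M,
       ∀ (M : Type u) [AddCommGroup M] [Module R M], Module.Injective R M → ModFlat R M] := by
  tfae_have 1 → 2 := by
    intro h M _ _ hM
    obtain ⟨ι, f, hf⟩ := h M hM
    exact ⟨ι →₀ R, inferInstance, inferInstance,
      flat_of_fac R _ fun P _ _ hP f => fac_free R ι P f, f, hf⟩
  tfae_have 2 → 1 := by
    intro h M _ _ hM
    obtain ⟨F, _, _, hF, f, hf⟩ := h M hM
    obtain ⟨ι, _, g, k, hgk⟩ := fac_of_flat R F hF M hM f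
    have hg : Injective g := by
      refine Injective.of_comp (f := k) ?_
      rw [← LinearMap.coe_comp, hgk]
      exact hf
    let e : (ι → R) ≃ₗ[R] (ULift.{u} ι →₀ R) :=
      (Finsupp.linearEquivFunOnFinite R R ι).symm.trans (Finsupp.domLCongr Equiv.ulift.symm)
    exact ⟨ULift.{u} ι, e.toLinearMap ∘ₗ g, e.injective.comp hg⟩
  tfae_have 1 → 3 := by
    intro h M _ _ hM
    refine flat_of_fac R M fun P _ _ hP f => ?_
    obtain ⟨ι, j, hj⟩ := h P hP
    obtain ⟨κ, _, g, k, hgk⟩ := fac_free R ι P j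
    have hg : Injective g := by
      refine Injective.of_comp (f := k) ?_
      rw [← LinearMap.coe_comp, hgk]
      exact hj
    let L := ULift.{u} κ → R
    let e : (κ → R) ≃ₗ[R] L := LinearEquiv.funCongrLeft R R Equiv.ulift
    let g' : P →ₗ[R] L := e.toLinearMap ∘ₗ g
    have hg' : Injective g' := e.injective.comp hg
    let N := LinearMap.range g'
    have hfp : Module.FinitePresentation R (L ⧸ N) :=
      Module.finitePresentation_of_surjective N.mkQ N.mkQ_surjective (by
        rw [Submodule.ker_mkQ]
        exact Module.Finite.fg_top.map g' |> fun h => by rwa [Submodule.map_top] at h)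
    let E : P ≃ₗ[R] N := LinearEquiv.ofInjective g' hg'
    obtain ⟨q, hq⟩ := aux_extend R M L N (hM _ hfp) (f ∘ₗ E.symm.toLinearMap)
    refine ⟨κ, inferInstance, g, q ∘ₗ e.toLinearMap, ?_⟩
    ext p
    have := hq (E p)
    simp only [LinearMap.comp_apply, LinearEquiv.coe_coe, LinearEquiv.symm_apply_apply] at this
    exact this
  tfae_have 3 → 4 := fun h M _ _ hM => h M (aux_fpinj_of_inj R M hM)
  tfae_have 4 → 2 := by
    intro h M _ _ _
    obtain ⟨F, i1, i2, hF, f, hf⟩ := aux_embed_inj R M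
    exact ⟨F, i1, i2, h F hF, f, hf⟩
  tfae_finish
end
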